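/- Let g be fixed and let F₁ satisfy the hypotheses of the extended Lienard theorem (f, g continuous on (−d,d); F₁ and g odd with g(x) > 0 for 0 < x < d; F₁ zero on (−d,d) only at 0, a, −a with 0 < a < d; F₁ monotone increasing on (a, ᾱ] and nondecreasing on (ᾱ, d) for the number ᾱ defined by the energy relations), so that the system ẋ = y − F₁(x), ẏ = −g(x) has a unique limit cycle Γ₁; let α̂ be its amplitude, i.e. the maximum of |x| over points (x, y) ∈ Γ₁. If F₂ also satisfies the same hypotheses with the same g, and F₂(x) = F₁(x) for all x with |x| ≤ α̂, then the unique limit cycle of ẋ = y − F₂(x), ẏ = −g(x) equals Γ₁; in particular its amplitude is also α̂. (The amplitude of the unique limit cycle is independent of the behavior of F as |x| → ∞.) -/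

import Mathlib

open Set Filter

/-- A solution of the Lienard system `ẋ = y - F x`, `ẏ = -g x`. -/
def IsSolution (F g : ℝ → ℝ) (x y : ℝ → ℝ) : Prop :=
  ∀ t : ℝ, HasDerivAt x (y t - F (x t)) t ∧ HasDerivAt y (-(g (x t))) t

/-- `Γ` is a closed orbit (limit cycle) of the Lienard system: the image of a
nonconstant periodic solution. -/
def IsPeriodicOrbitOf (F g : ℝ → ℝ) (Γ : Set (ℝ × ℝ)) : Prop :=
  ∃ x y : ℝ → ℝ, IsSolution F g x y ∧
    (∃ T : ℝ, 0 < T ∧ Function.Periodic x T ∧ Function.Periodic y T) ∧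
    (∃ t₁ t₂ : ℝ, x t₁ ≠ x t₂ ∨ y t₁ ≠ y t₂) ∧
    Γ = Set.range fun t => (x t, y t)

/-- `yp` is the ordinate `y₊(α) > 0` at which the trajectory through `Q = (α, F α)`,
followed backward in time, first meets the positive `y`-axis. -/
def IsYPlusAt (F g : ℝ → ℝ) (α yp : ℝ) : Prop :=
  0 < yp ∧ ∃ x y : ℝ → ℝ, IsSolution F g x y ∧ x 0 = α ∧ y 0 = F α ∧
    ∃ τ : ℝ, τ < 0 ∧ x τ = 0 ∧ y τ = yp ∧ ∀ t ∈ Set.Ioo τ 0, 0 < x t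

/-- `ym` is the ordinate `y₋(α) < 0` at which the trajectory through `Q = (α, F α)`,
followed forward in time, first meets the negative `y`-axis. -/
def IsYMinusAt (F g : ℝ → ℝ) (α ym : ℝ) : Prop :=
  ym < 0 ∧ ∃ x y : ℝ → ℝ, IsSolution F g x y ∧ x 0 = α ∧ y 0 = F α ∧
    ∃ τ : ℝ, 0 < τ ∧ x τ = 0 ∧ y τ = ym ∧ ∀ t ∈ Set.Ioo 0 τ, 0 < x t

/-- `abar = max (α', α'')` where `α'`, `α''` satisfy the energy relations
`G(α') = ½ y₊(α')² - ½ F(α')²` and `G(α'') = ½ y₋(α'')² - ½ F(α'')²`. -/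
def IsAlphaBar (F g : ℝ → ℝ) (abar : ℝ) : Prop :=
  ∃ α' α'' yp ym : ℝ, IsYPlusAt F g α' yp ∧ IsYMinusAt F g α'' ym ∧
    (∫ u in (0:ℝ)..α', g u) = yp ^ 2 / 2 - (F α') ^ 2 / 2 ∧
    (∫ u in (0:ℝ)..α'', g u) = ym ^ 2 / 2 - (F α'') ^ 2 / 2 ∧
    abar = max α' α''

/-- The hypotheses of the extended Lienard theorem (Theorem 2 of the paper). -/
def ExtLienardHyp (f g F : ℝ → ℝ) (d : ℝ) : Prop :=
  0 < d ∧ ContinuousOn f (Set.Ioo (-d) d) ∧ ContinuousOn g (Set.Ioo (-d) d) ∧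
  (∀ x, F x = ∫ u in (0:ℝ)..x, f u) ∧
  (∀ x, F (-x) = -F x) ∧ (∀ x, g (-x) = -g x) ∧
  (∀ x, 0 < x → x < d → 0 < g x) ∧
  ∃ a abar : ℝ, 0 < a ∧ a < d ∧
    (∀ x, -d < x → x < d → (F x = 0 ↔ x = 0 ∨ x = a ∨ x = -a)) ∧
    IsAlphaBar F g abar ∧ a < abar ∧ abar < d ∧
    StrictMonoOn F (Set.Ioc a abar) ∧ MonotoneOn F (Set.Ioo abar d)

/-!
On `x > 0` use the potential energy `u = G x` as a function of the ordinate `η = y`: along a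
trajectory `u' = Φ u - η` with `Φ = F ∘ G⁻¹`, so arcs of this equation never cross, and excursions
from the `y`-axis are nested. By oddness, reflecting an excursion to the left of the axis gives
another arc; nestedness forces the innermost and the outermost arcs of a closed orbit to be
symmetric, from `-r` to `r`. The energy `u + η² / 2` has derivative `Φ u` along an arc, hence takes
equal values at both ends of a symmetric arc. As `Φ` is negative below the level `A = G a` and
positive and nondecreasing above it, of two nested symmetric arcs the outer one would have a
strictly larger gain of energy. So there is only one symmetric arc, and at most one closed orbit.
If instead `F > 0` on `(0, a)`, energy is lost all along and there is no closed orbit at all.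
A closed orbit of the first system on which `F₂ = F₁` is also one of the second.
-/

open scoped Topology

section RealCalculus

theorem neg_of_deriv_neg_at_zeros {h h' : ℝ → ℝ} {a b : ℝ}
    (hd : ∀ t ∈ Ico a b, HasDerivAt h (h' t) t) (hz : ∀ t ∈ Ico a b, h t = 0 → h' t < 0)
    (ha : h a = 0) : ∀ t ∈ Ioo a b, h t < 0 := by
  have nonpos : ∀ t ∈ Ioo a b, h t ≤ 0 := by
    intro t ht
    have hsub : Icc a t ⊆ Ico a b := Icc_subset_Ico_right ht.2
    exact image_le_of_deriv_right_lt_deriv_boundary (B := fun _ => 0) (B' := fun _ => 0)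
      (fun s hs => (hd s (hsub hs)).continuousAt.continuousWithinAt)
      (fun s hs => (hd s (hsub (Ico_subset_Icc_self hs))).hasDerivWithinAt) ha.le
      (fun s => hasDerivAt_const s 0) (fun s hs => hz s (hsub (Ico_subset_Icc_self hs)))
      (right_mem_Icc.2 ht.1.le)
  intro t ht
  refine (nonpos t ht).lt_of_ne fun h0 => ?_
  have hmax : IsLocalMax h t := by
    filter_upwards [Ioo_mem_nhds ht.1 ht.2] with s hs
    exact (nonpos s hs).trans_eq h0.symm
  have ht' : t ∈ Ico a b := Ioo_subset_Ico_self ht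
  exact (hz t ht' h0).ne (hmax.hasDerivAt_eq_zero (hd t ht'))

theorem pos_of_deriv_neg_at_zeros {h h' : ℝ → ℝ} {a b : ℝ}
    (hd : ∀ t ∈ Ioc a b, HasDerivAt h (h' t) t) (hz : ∀ t ∈ Ioc a b, h t = 0 → h' t < 0)
    (hb : h b = 0) : ∀ t ∈ Ioo a b, 0 < h t := by
  have key := neg_of_deriv_neg_at_zeros (h := fun s => -h (-s)) (h' := fun s => h' (-s))
    (a := -b) (b := -a) ?_ ?_ (by simp [hb])
  · intro t ht
    simpa using key (-t) ⟨neg_lt_neg ht.2, neg_lt_neg ht.1⟩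
  · intro s hs
    exact ((hd (-s) ⟨lt_neg.1 hs.2, neg_le.1 hs.1⟩).comp s (hasDerivAt_neg s)).neg.congr_deriv
      (by simp)
  · intro s hs h0
    exact hz (-s) ⟨lt_neg.1 hs.2, neg_le.1 hs.1⟩ (neg_eq_zero.1 h0)

theorem continuousOn_image_of_leftInvOn {X Y : Type*} [TopologicalSpace X] [TopologicalSpace Y]
    [T2Space Y] {φ : X → Y} {ψ : Y → X} {K : Set X} (hK : IsCompact K) (hφ : ContinuousOn φ K)
    (hψ : LeftInvOn ψ φ K) : ContinuousOn ψ (φ '' K) := by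
  rw [continuousOn_iff_isClosed]
  intro C hC
  refine ⟨φ '' (C ∩ K),
    ((hK.inter_left hC).image_of_continuousOn (hφ.mono inter_subset_right)).isClosed, ?_⟩
  ext s
  constructor
  · rintro ⟨hs, t, ht, rfl⟩
    exact ⟨⟨t, ⟨by rwa [mem_preimage, hψ ht] at hs, ht⟩, rfl⟩, mem_image_of_mem φ ht⟩
  · rintro ⟨⟨t, ⟨htC, ht⟩, rfl⟩, hs⟩
    exact ⟨by rwa [mem_preimage, hψ ht], hs⟩

theorem exists_leftInv_hasDerivAt {u u' : ℝ → ℝ} {p q : ℝ} (hu : ContinuousOn u (uIcc p q))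
    (hinj : InjOn u (uIcc p q)) (hd : ∀ η ∈ uIoo p q, HasStrictDerivAt u (u' η) η)
    (hne : ∀ η ∈ uIoo p q, u' η ≠ 0) :
    ∃ Y : ℝ → ℝ, ContinuousOn Y (uIcc (u p) (u q)) ∧ Y (u p) = p ∧ Y (u q) = q ∧
      ∀ s ∈ uIoo (u p) (u q), Y s ∈ uIoo p q ∧ u (Y s) = s ∧ HasDerivAt Y (u' (Y s))⁻¹ s := by
  have hY : LeftInvOn (Function.invFunOn u (uIcc p q)) u (uIcc p q) := hinj.leftInvOn_invFunOn
  refine ⟨Function.invFunOn u (uIcc p q),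
    (continuousOn_image_of_leftInvOn isCompact_uIcc hu hY).mono (intermediate_value_uIcc hu),
    hY left_mem_uIcc, hY right_mem_uIcc, fun s hs => ?_⟩
  obtain ⟨η, hη, rfl⟩ : s ∈ u '' uIcc p q := intermediate_value_uIcc hu (uIoo_subset_uIcc_self hs)
  have hη' : η ∈ uIoo p q := by
    have hp : η ≠ p := by rintro rfl; exact left_notMem_uIoo hs
    have hq : η ≠ q := by rintro rfl; exact right_notMem_uIoo hs
    rcases le_total p q with h | h
    · rw [uIcc_of_le h] at hη
      exact mem_uIoo_of_lt (hη.1.lt_of_ne' hp) (hη.2.lt_of_ne hq)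
    · rw [uIcc_of_ge h] at hη
      exact mem_uIoo_of_gt (hη.1.lt_of_ne' hq) (hη.2.lt_of_ne hp)
  rw [hY hη]
  refine ⟨hη', rfl, ((hd η hη').to_local_left_inverse (hne η hη') ?_).hasDerivAt⟩
  filter_upwards [isOpen_Ioo.mem_nhds hη'] with x hx using hY (uIoo_subset_uIcc_self hx)

end RealCalculus

/-- The sign pattern of the damping `s ↦ Φ s` as a function of the potential energy `s`, which
ranges over the set `J`: the damping is negative below the level `A` and positive and nondecreasing
above it. -/
structure IsFilippovCharacteristic (Φ : ℝ → ℝ) (J : Set ℝ) (A : ℝ) : Prop where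
  exists_hasStrictDerivAt : ∀ s ∈ J, ∃ Φ', HasStrictDerivAt Φ Φ' s
  pos_of_mem : ∀ s ∈ J, 0 < s
  A_pos : 0 < A
  neg : ∀ s ∈ J, s < A → Φ s < 0
  pos : ∀ s ∈ J, A < s → 0 < Φ s
  monotoneOn : MonotoneOn Φ (J ∩ Ici A)

/-- An arc of `u' = Φ u - η` over the ordinates `η ∈ (lo, hi)`, where `u` is the potential energy.
The function `u` is extended by `0` outside `(lo, hi)`, so that equal arcs are equal functions. -/
structure IsFilippovArc (Φ : ℝ → ℝ) (J : Set ℝ) (lo hi : ℝ) (u : ℝ → ℝ) : Prop where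
  lo_neg : lo < 0
  hi_pos : 0 < hi
  continuous : Continuous u
  eq_zero : ∀ η ∉ Ioo lo hi, u η = 0
  mem : ∀ η ∈ Ioo lo hi, u η ∈ J
  hasDerivAt : ∀ η ∈ Ioo lo hi, HasDerivAt u (Φ (u η) - η) η

section FilippovArcs

variable {Φ : ℝ → ℝ} {J : Set ℝ} {A lo hi lo₁ hi₁ lo₂ hi₂ α β p q : ℝ} {u u₁ u₂ : ℝ → ℝ}

namespace IsFilippovArc

theorem zero_mem (hu : IsFilippovArc Φ J lo hi u) : (0 : ℝ) ∈ Ioo lo hi :=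
  ⟨hu.lo_neg, hu.hi_pos⟩

theorem apply_lo (hu : IsFilippovArc Φ J lo hi u) : u lo = 0 :=
  hu.eq_zero lo left_notMem_Ioo

theorem apply_hi (hu : IsFilippovArc Φ J lo hi u) : u hi = 0 :=
  hu.eq_zero hi right_notMem_Ioo

theorem pos (hu : IsFilippovArc Φ J lo hi u) (hΦ : IsFilippovCharacteristic Φ J A) {η : ℝ}
    (hη : η ∈ Ioo lo hi) : 0 < u η :=
  hΦ.pos_of_mem _ (hu.mem η hη)

theorem mem_Ioo_of_pos (hu : IsFilippovArc Φ J lo hi u) {η : ℝ} (hη : 0 < u η) : η ∈ Ioo lo hi :=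
  by_contra fun h => hη.ne' (hu.eq_zero η h)

theorem nonneg (hu : IsFilippovArc Φ J lo hi u) (hΦ : IsFilippovCharacteristic Φ J A) (η : ℝ) :
    0 ≤ u η := by
  by_cases hη : η ∈ Ioo lo hi
  · exact (hu.pos hΦ hη).le
  · exact (hu.eq_zero η hη).ge

theorem eventuallyEq (h₁ : IsFilippovArc Φ J lo₁ hi₁ u₁) (h₂ : IsFilippovArc Φ J lo₂ hi₂ u₂)
    (hΦ : IsFilippovCharacteristic Φ J A) {η : ℝ} (hη₁ : η ∈ Ioo lo₁ hi₁) (hη₂ : η ∈ Ioo lo₂ hi₂)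
    (h : u₁ η = u₂ η) : u₁ =ᶠ[𝓝 η] u₂ := by
  obtain ⟨Φ', hΦ'⟩ := hΦ.exists_hasStrictDerivAt _ (h₁.mem η hη₁)
  obtain ⟨K, V, hV, hK⟩ := hΦ'.hasStrictFDerivAt.exists_lipschitzOnWith
  refine ODE_solution_unique_of_eventually (v := fun η s => Φ s - η) (s := fun _ => V) (K := K)
    (.of_forall fun η => by simpa using hK.sub (LipschitzWith.const η).lipschitzOnWith) ?_ ?_ h
  · filter_upwards [isOpen_Ioo.mem_nhds hη₁, h₁.continuous.continuousAt hV] with t ht htV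
    exact ⟨h₁.hasDerivAt t ht, htV⟩
  · filter_upwards [isOpen_Ioo.mem_nhds hη₂, h₂.continuous.continuousAt (h ▸ hV)] with t ht htV
    exact ⟨h₂.hasDerivAt t ht, htV⟩

theorem eqOn_of_apply_eq (h₁ : IsFilippovArc Φ J lo₁ hi₁ u₁) (h₂ : IsFilippovArc Φ J lo₂ hi₂ u₂)
    (hΦ : IsFilippovCharacteristic Φ J A) {η₀ : ℝ} (hη₀ : η₀ ∈ Ioo lo₁ hi₁) (h : u₁ η₀ = u₂ η₀) :
    EqOn u₁ u₂ (Ioo lo₁ hi₁) := by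
  have mem₂ : ∀ η ∈ Ioo lo₁ hi₁, u₁ η = u₂ η → η ∈ Ioo lo₂ hi₂ := fun η hη he =>
    h₂.mem_Ioo_of_pos (he ▸ h₁.pos hΦ hη)
  have hsub : Ioo lo₁ hi₁ ⊆ interior {η | u₁ η = u₂ η} := by
    have of_eq : ∀ η ∈ Ioo lo₁ hi₁, u₁ η = u₂ η → η ∈ interior {η | u₁ η = u₂ η} :=
      fun η hη he => mem_interior_iff_mem_nhds.2 (h₁.eventuallyEq h₂ hΦ hη (mem₂ η hη he) he)
    refine isPreconnected_Ioo.subset_of_closure_inter_subset isOpen_interior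
      ⟨η₀, hη₀, of_eq η₀ hη₀ h⟩ ?_
    rintro η ⟨hcl, hη⟩
    refine of_eq η hη ?_
    exact closure_minimal interior_subset (isClosed_eq h₁.continuous h₂.continuous) hcl
  exact fun η hη => (interior_subset (hsub hη) : η ∈ {η | u₁ η = u₂ η})

theorem eq_of_apply_eq (h₁ : IsFilippovArc Φ J lo₁ hi₁ u₁) (h₂ : IsFilippovArc Φ J lo₂ hi₂ u₂)
    (hΦ : IsFilippovCharacteristic Φ J A) {η₀ : ℝ} (hη₀ : η₀ ∈ Ioo lo₁ hi₁) (h : u₁ η₀ = u₂ η₀) :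
    u₁ = u₂ := by
  have hη₀' : η₀ ∈ Ioo lo₂ hi₂ := h₂.mem_Ioo_of_pos (h ▸ h₁.pos hΦ hη₀)
  funext η
  by_cases hη₁ : η ∈ Ioo lo₁ hi₁
  · exact h₁.eqOn_of_apply_eq h₂ hΦ hη₀ h hη₁
  by_cases hη₂ : η ∈ Ioo lo₂ hi₂
  · exact (h₂.eqOn_of_apply_eq h₁ hΦ hη₀' h.symm hη₂).symm
  · rw [h₁.eq_zero η hη₁, h₂.eq_zero η hη₂]

theorem lt_of_apply_zero_lt (h₁ : IsFilippovArc Φ J lo₁ hi₁ u₁)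
    (h₂ : IsFilippovArc Φ J lo₂ hi₂ u₂) (hΦ : IsFilippovCharacteristic Φ J A) (h0 : u₁ 0 < u₂ 0) :
    ∀ η ∈ Ioo lo₁ hi₁, u₁ η < u₂ η := by
  intro η hη
  by_contra! hle
  obtain ⟨ξ, hξ, he⟩ := isPreconnected_Ioo.intermediate_value₂ h₁.zero_mem hη
    h₁.continuous.continuousOn h₂.continuous.continuousOn h0.le hle
  exact h0.ne (congrFun (h₁.eq_of_apply_eq h₂ hΦ hξ he) 0)

theorem le_of_apply_zero_le (h₁ : IsFilippovArc Φ J lo₁ hi₁ u₁)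
    (h₂ : IsFilippovArc Φ J lo₂ hi₂ u₂) (hΦ : IsFilippovCharacteristic Φ J A)
    (h0 : u₁ 0 ≤ u₂ 0) : u₁ ≤ u₂ := by
  rcases h0.eq_or_lt with h0 | h0
  · exact (h₁.eq_of_apply_eq h₂ hΦ h₁.zero_mem h0).le
  intro η
  by_cases hη : η ∈ Ioo lo₁ hi₁
  · exact (h₁.lt_of_apply_zero_lt h₂ hΦ h0 η hη).le
  · exact (h₁.eq_zero η hη).trans_le (h₂.nonneg hΦ η)

theorem Icc_subset_Icc_of_le (h₁ : IsFilippovArc Φ J lo₁ hi₁ u₁) (h₂ : IsFilippovArc Φ J lo₂ hi₂ u₂)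
    (hΦ : IsFilippovCharacteristic Φ J A) (hle : u₁ ≤ u₂) : lo₂ ≤ lo₁ ∧ hi₁ ≤ hi₂ :=
  (Ioo_subset_Ioo_iff (h₁.lo_neg.trans h₁.hi_pos)).1 fun η hη =>
    h₂.mem_Ioo_of_pos ((h₁.pos hΦ hη).trans_le (hle η))

theorem lo_le_lo_of_hi_lt_hi (h₁ : IsFilippovArc Φ J lo₁ hi₁ u₁)
    (h₂ : IsFilippovArc Φ J lo₂ hi₂ u₂) (hΦ : IsFilippovCharacteristic Φ J A) (h : hi₁ < hi₂) :
    lo₂ ≤ lo₁ := by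
  rcases le_total (u₁ 0) (u₂ 0) with h0 | h0
  · exact (h₁.Icc_subset_Icc_of_le h₂ hΦ (h₁.le_of_apply_zero_le h₂ hΦ h0)).1
  · exact absurd (h₂.Icc_subset_Icc_of_le h₁ hΦ (h₂.le_of_apply_zero_le h₁ hΦ h0)).2 h.not_ge

theorem exists_peak (hu : IsFilippovArc Φ J lo hi u) (hΦ : IsFilippovCharacteristic Φ J A) :
    ∃ m ∈ Ioo lo hi, (∀ η ∈ Ioo lo m, 0 < Φ (u η) - η) ∧ ∀ η ∈ Ioo m hi, Φ (u η) - η < 0 := by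
  obtain ⟨m, -, hmax⟩ := isCompact_Icc.exists_isMaxOn
    (nonempty_Icc.2 (hu.lo_neg.trans hu.hi_pos).le) hu.continuous.continuousOn
  have hm' : m ∈ Ioo lo hi := hu.mem_Ioo_of_pos
    ((hu.pos hΦ hu.zero_mem).trans_le (hmax (Ioo_subset_Icc_self hu.zero_mem)))
  have h0 : Φ (u m) - m = 0 :=
    (hmax.isLocalMax (Icc_mem_nhds hm'.1 hm'.2)).hasDerivAt_eq_zero (hu.hasDerivAt m hm')
  have hd : ∀ η ∈ Ioo lo hi, HasDerivAt (fun η => Φ (u η) - η)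
      (deriv Φ (u η) * (Φ (u η) - η) - 1) η := by
    intro η hη
    obtain ⟨Φ', hΦ'⟩ := hΦ.exists_hasStrictDerivAt _ (hu.mem η hη)
    exact (hΦ'.hasDerivAt.differentiableAt.hasDerivAt.comp η (hu.hasDerivAt η hη)).sub
      (hasDerivAt_id η)
  have hz : ∀ η, Φ (u η) - η = 0 → deriv Φ (u η) * (Φ (u η) - η) - 1 < 0 := by
    intro η h
    simp [h]
  exact ⟨m, hm', pos_of_deriv_neg_at_zeros (fun η hη => hd η ⟨hη.1, hη.2.trans_lt hm'.2⟩)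
    (fun η _ => hz η) h0, neg_of_deriv_neg_at_zeros
    (fun η hη => hd η ⟨hm'.1.trans_le hη.1, hη.2⟩) (fun η _ => hz η) h0⟩

theorem strictMonoOn (hu : IsFilippovArc Φ J lo hi u) (hα : lo ≤ α) (hβ : β ≤ hi)
    (h : ∀ η ∈ Ioo α β, 0 < Φ (u η) - η) : StrictMonoOn u (Icc α β) := by
  refine strictMonoOn_of_hasDerivWithinAt_pos (convex_Icc α β) hu.continuous.continuousOn
    (f' := fun η => Φ (u η) - η) ?_ (by rwa [interior_Icc])
  rw [interior_Icc]
  exact fun η hη => (hu.hasDerivAt η (Ioo_subset_Ioo hα hβ hη)).hasDerivWithinAt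

theorem strictAntiOn (hu : IsFilippovArc Φ J lo hi u) (hα : lo ≤ α) (hβ : β ≤ hi)
    (h : ∀ η ∈ Ioo α β, Φ (u η) - η < 0) : StrictAntiOn u (Icc α β) := by
  refine strictAntiOn_of_hasDerivWithinAt_neg (convex_Icc α β) hu.continuous.continuousOn
    (f' := fun η => Φ (u η) - η) ?_ (by rwa [interior_Icc])
  rw [interior_Icc]
  exact fun η hη => (hu.hasDerivAt η (Ioo_subset_Ioo hα hβ hη)).hasDerivWithinAt

theorem hasDerivAt_energy (hu : IsFilippovArc Φ J lo hi u) {η : ℝ} (hη : η ∈ Ioo lo hi) :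
    HasDerivAt (fun η => u η + η ^ 2 / 2) (Φ (u η)) η :=
  ((hu.hasDerivAt η hη).add ((hasDerivAt_pow 2 η).div_const 2)).congr_deriv (by simp)

theorem energy_strictMonoOn (hu : IsFilippovArc Φ J lo hi u) (hα : lo ≤ α) (hβ : β ≤ hi)
    (h : ∀ η ∈ Ioo α β, 0 < Φ (u η)) : StrictMonoOn (fun η => u η + η ^ 2 / 2) (Icc α β) := by
  refine strictMonoOn_of_hasDerivWithinAt_pos (convex_Icc α β)
    (hu.continuous.add (by fun_prop)).continuousOn (f' := fun η => Φ (u η)) ?_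
    (by rwa [interior_Icc])
  rw [interior_Icc]
  exact fun η hη => (hu.hasDerivAt_energy (Ioo_subset_Ioo hα hβ hη)).hasDerivWithinAt

theorem energy_strictAntiOn (hu : IsFilippovArc Φ J lo hi u) (hα : lo ≤ α) (hβ : β ≤ hi)
    (h : ∀ η ∈ Ioo α β, Φ (u η) < 0) : StrictAntiOn (fun η => u η + η ^ 2 / 2) (Icc α β) := by
  refine strictAntiOn_of_hasDerivWithinAt_neg (convex_Icc α β)
    (hu.continuous.add (by fun_prop)).continuousOn (f' := fun η => Φ (u η)) ?_
    (by rwa [interior_Icc])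
  rw [interior_Icc]
  exact fun η hη => (hu.hasDerivAt_energy (Ioo_subset_Ioo hα hβ hη)).hasDerivWithinAt

end IsFilippovArc

/-- The part `[c, b]` of an arc over which it lies above the level `A`. The arc increases before
`c` and decreases after `b`. -/
structure IsFilippovCap (Φ : ℝ → ℝ) (A : ℝ) (u : ℝ → ℝ) (lo hi c b : ℝ) : Prop where
  lo_lt_left : lo < c
  left_lt_right : c < b
  right_lt_hi : b < hi
  apply_left : u c = A
  apply_right : u b = A
  above : ∀ η ∈ Ioo c b, A < u η
  deriv_pos : ∀ η ∈ Ioo lo c, 0 < Φ (u η) - η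
  deriv_neg : ∀ η ∈ Ioo b hi, Φ (u η) - η < 0

theorem IsFilippovArc.lt_peak_of_symm (hu : IsFilippovArc Φ J (-p) p u)
    (hΦ : IsFilippovCharacteristic Φ J A) {m : ℝ} (hm : m ∈ Ioo (-p) p)
    (hmono : StrictMonoOn u (Icc (-p) m)) (hanti : StrictAntiOn u (Icc m p)) : A < u m := by
  by_contra! hA
  have left : StrictAntiOn (fun η => u η + η ^ 2 / 2) (Icc (-p) m) := by
    refine hu.energy_strictAntiOn le_rfl hm.2.le fun η hη => ?_
    refine hΦ.neg _ (hu.mem η ⟨hη.1, hη.2.trans hm.2⟩) (lt_of_lt_of_le ?_ hA)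
    exact hmono (Ioo_subset_Icc_self hη) (right_mem_Icc.2 hm.1.le) hη.2
  have right : StrictAntiOn (fun η => u η + η ^ 2 / 2) (Icc m p) := by
    refine hu.energy_strictAntiOn hm.1.le le_rfl fun η hη => ?_
    refine hΦ.neg _ (hu.mem η ⟨hm.1.trans hη.1, hη.2⟩) (lt_of_lt_of_le ?_ hA)
    exact hanti (left_mem_Icc.2 hm.2.le) (Ioo_subset_Icc_self hη) hη.1
  have hlt : u p + p ^ 2 / 2 < u (-p) + (-p) ^ 2 / 2 :=
    (right (left_mem_Icc.2 hm.2.le) (right_mem_Icc.2 hm.2.le) hm.2).trans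
      (left (left_mem_Icc.2 hm.1.le) (right_mem_Icc.2 hm.1.le) hm.1)
  simp [hu.apply_lo, hu.apply_hi] at hlt

theorem IsFilippovArc.exists_isFilippovCap (hu : IsFilippovArc Φ J (-p) p u)
    (hΦ : IsFilippovCharacteristic Φ J A) : ∃ c b, IsFilippovCap Φ A u (-p) p c b := by
  obtain ⟨m, hm, hpos, hneg⟩ := hu.exists_peak hΦ
  have hmono := hu.strictMonoOn le_rfl hm.2.le hpos
  have hanti := hu.strictAntiOn hm.1.le le_rfl hneg
  have hpeak : A < u m := hu.lt_peak_of_symm hΦ hm hmono hanti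
  obtain ⟨c, hc, hcA⟩ := intermediate_value_Ioo hm.1.le hu.continuous.continuousOn
    (show A ∈ Ioo (u (-p)) (u m) from ⟨hu.apply_lo ▸ hΦ.A_pos, hpeak⟩)
  obtain ⟨b, hb, hbA⟩ := intermediate_value_Ioo' hm.2.le hu.continuous.continuousOn
    (show A ∈ Ioo (u p) (u m) from ⟨hu.apply_hi ▸ hΦ.A_pos, hpeak⟩)
  refine ⟨c, b, hc.1, hc.2.trans hb.1, hb.2, hcA, hbA, fun η hη => ?_,
    fun η hη => hpos η ⟨hη.1, hη.2.trans hc.2⟩, fun η hη => hneg η ⟨hb.1.trans hη.1, hη.2⟩⟩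
  rcases le_total η m with h | h
  · exact hcA ▸ hmono (Ioo_subset_Icc_self hc) ⟨(hc.1.trans hη.1).le, h⟩ hη.1
  · exact hbA ▸ hanti ⟨h, (hη.2.trans hb.2).le⟩ (Ioo_subset_Icc_self hb) hη.2

theorem IsFilippovArc.hasStrictDerivAt (hu : IsFilippovArc Φ J lo hi u)
    (hΦ : IsFilippovCharacteristic Φ J A) {η : ℝ} (hη : η ∈ Ioo lo hi) :
    HasStrictDerivAt u (Φ (u η) - η) η := by
  refine hasStrictDerivAt_of_hasDerivAt_of_continuousAt (f' := fun η => Φ (u η) - η) ?_ ?_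
  · filter_upwards [isOpen_Ioo.mem_nhds hη] with ξ hξ using hu.hasDerivAt ξ hξ
  · obtain ⟨Φ', hΦ'⟩ := hΦ.exists_hasStrictDerivAt _ (hu.mem η hη)
    exact (hΦ'.hasDerivAt.continuousAt.comp hu.continuous.continuousAt).sub continuousAt_id

/-- `Y` inverts an arc with potential energy `u` on energies in `[0, A]`, taking values in the
ordinates strictly between `e₀ = Y 0` and `e₁ = Y A`. -/
structure IsFilippovBranch (Φ : ℝ → ℝ) (A : ℝ) (u : ℝ → ℝ) (e₀ e₁ : ℝ) (Y : ℝ → ℝ) : Prop where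
  continuousOn : ContinuousOn Y (Icc 0 A)
  apply_zero : Y 0 = e₀
  apply_A : Y A = e₁
  mem : ∀ s ∈ Ioo 0 A, Y s ∈ uIoo e₀ e₁
  rightInv : ∀ s ∈ Ioo 0 A, u (Y s) = s
  hasDerivAt : ∀ s ∈ Ioo 0 A, HasDerivAt Y (Φ s - Y s)⁻¹ s

theorem IsFilippovArc.exists_isFilippovBranch (hu : IsFilippovArc Φ J lo hi u)
    (hΦ : IsFilippovCharacteristic Φ J A) {e₀ e₁ : ℝ} (h₀ : u e₀ = 0) (h₁ : u e₁ = A)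
    (hsub : uIoo e₀ e₁ ⊆ Ioo lo hi) (hinj : InjOn u (uIcc e₀ e₁))
    (hne : ∀ η ∈ uIoo e₀ e₁, Φ (u η) - η ≠ 0) : ∃ Y, IsFilippovBranch Φ A u e₀ e₁ Y := by
  obtain ⟨Y, hY, hY₀, hY₁, hY'⟩ := exists_leftInv_hasDerivAt hu.continuous.continuousOn hinj
    (fun η hη => hu.hasStrictDerivAt hΦ (hsub hη)) hne
  simp only [h₀, h₁, uIcc_of_le hΦ.A_pos.le, uIoo_of_le hΦ.A_pos.le] at hY hY₀ hY₁ hY'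
  refine ⟨Y, hY, hY₀, hY₁, fun s hs => (hY' s hs).1, fun s hs => (hY' s hs).2.1, fun s hs => ?_⟩
  obtain ⟨-, hs₁, hs₂⟩ := hY' s hs
  rwa [hs₁] at hs₂

namespace IsFilippovCap

variable {c b : ℝ}

theorem exists_upper_branch (hc : IsFilippovCap Φ A u lo hi c b) (hu : IsFilippovArc Φ J lo hi u)
    (hΦ : IsFilippovCharacteristic Φ J A) : ∃ Y, IsFilippovBranch Φ A u hi b Y := by
  have hlo : lo < b := hc.lo_lt_left.trans hc.left_lt_right
  refine hu.exists_isFilippovBranch hΦ hu.apply_hi hc.apply_right ?_ ?_ ?_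
  · rw [uIoo_of_ge hc.right_lt_hi.le]
    exact Ioo_subset_Ioo_left hlo.le
  · rw [uIcc_of_ge hc.right_lt_hi.le]
    exact (hu.strictAntiOn hlo.le le_rfl hc.deriv_neg).injOn
  · rw [uIoo_of_ge hc.right_lt_hi.le]
    exact fun η hη => (hc.deriv_neg η hη).ne

theorem exists_lower_branch (hc : IsFilippovCap Φ A u lo hi c b) (hu : IsFilippovArc Φ J lo hi u)
    (hΦ : IsFilippovCharacteristic Φ J A) : ∃ Y, IsFilippovBranch Φ A u lo c Y := by
  have hhi : c < hi := hc.left_lt_right.trans hc.right_lt_hi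
  refine hu.exists_isFilippovBranch hΦ hu.apply_lo hc.apply_left ?_ ?_ ?_
  · rw [uIoo_of_le hc.lo_lt_left.le]
    exact Ioo_subset_Ioo_right hhi.le
  · rw [uIcc_of_le hc.lo_lt_left.le]
    exact (hu.strictMonoOn le_rfl hhi.le hc.deriv_pos).injOn
  · rw [uIoo_of_le hc.lo_lt_left.le]
    exact fun η hη => (hc.deriv_pos η hη).ne'

theorem mem_Ioo_of_lt (hc : IsFilippovCap Φ A u lo hi c b) (hu : IsFilippovArc Φ J lo hi u)
    {η : ℝ} (hη : η ∈ Ioo lo hi) (h : A < u η) : η ∈ Ioo c b := by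
  have hlo : lo < b := hc.lo_lt_left.trans hc.left_lt_right
  have hhi : c < hi := hc.left_lt_right.trans hc.right_lt_hi
  constructor <;> by_contra! hle
  · have := (hu.strictMonoOn le_rfl hhi.le hc.deriv_pos).monotoneOn ⟨hη.1.le, hle⟩
      (right_mem_Icc.2 hc.lo_lt_left.le) hle
    exact (h.trans_le (this.trans_eq hc.apply_left)).false
  · have := (hu.strictAntiOn hlo.le le_rfl hc.deriv_neg).antitoneOn
      (left_mem_Icc.2 hc.right_lt_hi.le) ⟨hle, hη.2.le⟩ hle
    exact (h.trans_le (this.trans_eq hc.apply_right)).false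

end IsFilippovCap

/-- The two derivatives `2 y / (Φ - y)` and `2 z / (Φ - z)` differ by
`2 Φ (y - z) / ((Φ - y) (Φ - z))`, so a negative damping turns the order of the branches into the
monotonicity of the difference of their squares. -/
theorem sq_sub_sq_le_of_hasDerivAt_inv {Y Z : ℝ → ℝ} (hA : 0 ≤ A) (hY : ContinuousOn Y (Icc 0 A))
    (hZ : ContinuousOn Z (Icc 0 A)) (hY' : ∀ s ∈ Ioo 0 A, HasDerivAt Y (Φ s - Y s)⁻¹ s)
    (hZ' : ∀ s ∈ Ioo 0 A, HasDerivAt Z (Φ s - Z s)⁻¹ s) (hΦ : ∀ s ∈ Ioo 0 A, Φ s ≤ 0)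
    (hYZ : ∀ s ∈ Ioo 0 A, 0 < (Φ s - Y s) * (Φ s - Z s)) (hle : ∀ s ∈ Ioo 0 A, Y s ≤ Z s) :
    Y 0 ^ 2 - Z 0 ^ 2 ≤ Y A ^ 2 - Z A ^ 2 := by
  have hmono : MonotoneOn (fun s => Y s ^ 2 - Z s ^ 2) (Icc 0 A) := by
    refine monotoneOn_of_hasDerivWithinAt_nonneg (convex_Icc 0 A) ((hY.pow 2).sub (hZ.pow 2))
      (f' := fun s => 2 * Φ s * (Y s - Z s) / ((Φ s - Y s) * (Φ s - Z s))) ?_ ?_ <;>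
      rw [interior_Icc]
    · intro s hs
      refine ((((hY' s hs).pow 2).sub ((hZ' s hs).pow 2)).congr_deriv ?_).hasDerivWithinAt
      have hY₀ := left_ne_zero_of_mul (hYZ s hs).ne'
      have hZ₀ := right_ne_zero_of_mul (hYZ s hs).ne'
      field_simp
      ring
    · intro s hs
      refine div_nonneg ?_ (hYZ s hs).le
      exact mul_nonneg_of_nonpos_of_nonpos (by linarith [hΦ s hs]) (sub_nonpos.2 (hle s hs))
  exact hmono (left_mem_Icc.2 hA) (right_mem_Icc.2 hA) hA

theorem IsFilippovBranch.damping_neg {e₀ e₁ : ℝ} {Y : ℝ → ℝ}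
    (hY : IsFilippovBranch Φ A u e₀ e₁ Y) (hu : IsFilippovArc Φ J lo hi u)
    (hΦ : IsFilippovCharacteristic Φ J A) : ∀ s ∈ Ioo 0 A, Φ s < 0 := by
  intro s hs
  have hmem : Y s ∈ Ioo lo hi := hu.mem_Ioo_of_pos ((hY.rightInv s hs).symm ▸ hs.1)
  exact hΦ.neg s (hY.rightInv s hs ▸ hu.mem _ hmem) hs.2

namespace IsFilippovCap

variable {c₁ b₁ c₂ b₂ : ℝ}

theorem hi_sq_sub_hi_sq_le (hc₁ : IsFilippovCap Φ A u₁ lo₁ hi₁ c₁ b₁)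
    (hc₂ : IsFilippovCap Φ A u₂ lo₂ hi₂ c₂ b₂) (hu₁ : IsFilippovArc Φ J lo₁ hi₁ u₁)
    (hu₂ : IsFilippovArc Φ J lo₂ hi₂ u₂) (hΦ : IsFilippovCharacteristic Φ J A) (hle : u₁ ≤ u₂) :
    hi₁ ^ 2 - hi₂ ^ 2 ≤ b₁ ^ 2 - b₂ ^ 2 := by
  obtain ⟨Y₁, hY₁⟩ := hc₁.exists_upper_branch hu₁ hΦ
  obtain ⟨Y₂, hY₂⟩ := hc₂.exists_upper_branch hu₂ hΦ
  have mem₁ : ∀ s ∈ Ioo 0 A, Y₁ s ∈ Ioo b₁ hi₁ := by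
    simpa only [uIoo_of_ge hc₁.right_lt_hi.le] using hY₁.mem
  have mem₂ : ∀ s ∈ Ioo 0 A, Y₂ s ∈ Ioo b₂ hi₂ := by
    simpa only [uIoo_of_ge hc₂.right_lt_hi.le] using hY₂.mem
  have hY : ∀ s ∈ Ioo 0 A, Y₁ s ≤ Y₂ s := by
    intro s hs
    by_contra! hlt
    have := hu₂.strictAntiOn (hc₂.lo_lt_left.trans hc₂.left_lt_right).le le_rfl hc₂.deriv_neg
      (Ioo_subset_Icc_self (mem₂ s hs)) ⟨((mem₂ s hs).1.trans hlt).le,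
        (mem₁ s hs).2.le.trans (hu₁.Icc_subset_Icc_of_le hu₂ hΦ hle).2⟩ hlt
    rw [hY₂.rightInv s hs] at this
    exact (this.trans_eq (hY₁.rightInv s hs).symm).not_ge (hle _)
  have := sq_sub_sq_le_of_hasDerivAt_inv hΦ.A_pos.le hY₁.continuousOn hY₂.continuousOn
    hY₁.hasDerivAt hY₂.hasDerivAt (fun s hs => (hY₁.damping_neg hu₁ hΦ s hs).le) ?_ hY
  · rwa [hY₁.apply_zero, hY₁.apply_A, hY₂.apply_zero, hY₂.apply_A] at this
  · intro s hs
    have h₁ := hc₁.deriv_neg _ (mem₁ s hs)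
    have h₂ := hc₂.deriv_neg _ (mem₂ s hs)
    rw [hY₁.rightInv s hs] at h₁
    rw [hY₂.rightInv s hs] at h₂
    exact mul_pos_of_neg_of_neg h₁ h₂

theorem lo_sq_sub_lo_sq_le (hc₁ : IsFilippovCap Φ A u₁ lo₁ hi₁ c₁ b₁)
    (hc₂ : IsFilippovCap Φ A u₂ lo₂ hi₂ c₂ b₂) (hu₁ : IsFilippovArc Φ J lo₁ hi₁ u₁)
    (hu₂ : IsFilippovArc Φ J lo₂ hi₂ u₂) (hΦ : IsFilippovCharacteristic Φ J A) (hle : u₁ ≤ u₂) :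
    lo₂ ^ 2 - lo₁ ^ 2 ≤ c₂ ^ 2 - c₁ ^ 2 := by
  obtain ⟨Y₁, hY₁⟩ := hc₁.exists_lower_branch hu₁ hΦ
  obtain ⟨Y₂, hY₂⟩ := hc₂.exists_lower_branch hu₂ hΦ
  have mem₁ : ∀ s ∈ Ioo 0 A, Y₁ s ∈ Ioo lo₁ c₁ := by
    simpa only [uIoo_of_le hc₁.lo_lt_left.le] using hY₁.mem
  have mem₂ : ∀ s ∈ Ioo 0 A, Y₂ s ∈ Ioo lo₂ c₂ := by
    simpa only [uIoo_of_le hc₂.lo_lt_left.le] using hY₂.mem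
  have hY : ∀ s ∈ Ioo 0 A, Y₂ s ≤ Y₁ s := by
    intro s hs
    by_contra! hlt
    have := hu₂.strictMonoOn le_rfl (hc₂.left_lt_right.trans hc₂.right_lt_hi).le hc₂.deriv_pos
      ⟨(hu₁.Icc_subset_Icc_of_le hu₂ hΦ hle).1.trans (mem₁ s hs).1.le,
        (hlt.trans (mem₂ s hs).2).le⟩ (Ioo_subset_Icc_self (mem₂ s hs)) hlt
    rw [hY₂.rightInv s hs] at this
    exact (this.trans_eq (hY₁.rightInv s hs).symm).not_ge (hle _)
  have := sq_sub_sq_le_of_hasDerivAt_inv hΦ.A_pos.le hY₂.continuousOn hY₁.continuousOn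
    hY₂.hasDerivAt hY₁.hasDerivAt (fun s hs => (hY₁.damping_neg hu₁ hΦ s hs).le) ?_ hY
  · rwa [hY₁.apply_zero, hY₁.apply_A, hY₂.apply_zero, hY₂.apply_A] at this
  · intro s hs
    have h₁ := hc₁.deriv_pos _ (mem₁ s hs)
    have h₂ := hc₂.deriv_pos _ (mem₂ s hs)
    rw [hY₁.rightInv s hs] at h₁
    rw [hY₂.rightInv s hs] at h₂
    exact mul_pos h₂ h₁

theorem apply_left_le_apply_right_of_lt (hc₁ : IsFilippovCap Φ A u₁ lo₁ hi₁ c₁ b₁)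
    (hu₁ : IsFilippovArc Φ J lo₁ hi₁ u₁) (hu₂ : IsFilippovArc Φ J lo₂ hi₂ u₂)
    (hΦ : IsFilippovCharacteristic Φ J A) (hlt : ∀ η ∈ Ioo lo₁ hi₁, u₁ η < u₂ η) :
    u₂ c₁ ≤ u₂ b₁ := by
  have hsub : Ioo c₁ b₁ ⊆ Ioo lo₁ hi₁ := Ioo_subset_Ioo hc₁.lo_lt_left.le hc₁.right_lt_hi.le
  have mem₂ : ∀ η ∈ Ioo lo₁ hi₁, η ∈ Ioo lo₂ hi₂ := fun η hη =>
    hu₂.mem_Ioo_of_pos ((hu₁.pos hΦ hη).trans (hlt η hη))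
  have hmono : MonotoneOn (fun η => u₂ η - u₁ η) (Icc c₁ b₁) := by
    refine monotoneOn_of_hasDerivWithinAt_nonneg (convex_Icc c₁ b₁)
      (hu₂.continuous.sub hu₁.continuous).continuousOn
      (f' := fun η => Φ (u₂ η) - η - (Φ (u₁ η) - η)) ?_ ?_ <;> rw [interior_Icc] <;> intro η hη
    · exact ((hu₂.hasDerivAt η (mem₂ η (hsub hη))).sub
        (hu₁.hasDerivAt η (hsub hη))).hasDerivWithinAt
    · have hA := hc₁.above η hη
      have hlt' := hlt η (hsub hη)
      simpa using hΦ.monotoneOn ⟨hu₁.mem η (hsub hη), hA.le⟩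
        ⟨hu₂.mem η (mem₂ η (hsub hη)), (hA.trans hlt').le⟩ hlt'.le
  simpa [hc₁.apply_left, hc₁.apply_right] using hmono (left_mem_Icc.2 hc₁.left_lt_right.le)
    (right_mem_Icc.2 hc₁.left_lt_right.le) hc₁.left_lt_right.le

end IsFilippovCap

namespace IsFilippovArc

theorem apply_zero_le_of_symm (h₁ : IsFilippovArc Φ J (-p) p u₁)
    (h₂ : IsFilippovArc Φ J (-q) q u₂) (hΦ : IsFilippovCharacteristic Φ J A) : u₂ 0 ≤ u₁ 0 := by
  by_contra! h0
  have hlt := h₁.lt_of_apply_zero_lt h₂ hΦ h0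
  have hle := h₁.le_of_apply_zero_le h₂ hΦ h0.le
  obtain ⟨c₁, b₁, hc₁⟩ := h₁.exists_isFilippovCap hΦ
  obtain ⟨c₂, b₂, hc₂⟩ := h₂.exists_isFilippovCap hΦ
  have mem_cap : ∀ η ∈ Ioo (-p) p, u₁ η = A → η ∈ Ioo c₂ b₂ := fun η hη hA =>
    hc₂.mem_Ioo_of_lt h₂ (h₂.mem_Ioo_of_pos ((h₁.pos hΦ hη).trans (hlt η hη))) (hA ▸ hlt η hη)
  have hc : c₁ ∈ Ioo c₂ b₂ :=
    mem_cap c₁ ⟨hc₁.lo_lt_left, hc₁.left_lt_right.trans hc₁.right_lt_hi⟩ hc₁.apply_left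
  have hb : b₁ ∈ Ioo c₂ b₂ :=
    mem_cap b₁ ⟨hc₁.lo_lt_left.trans hc₁.left_lt_right, hc₁.right_lt_hi⟩ hc₁.apply_right
  have energy : StrictMonoOn (fun η => u₂ η + η ^ 2 / 2) (Icc c₂ b₂) := by
    refine h₂.energy_strictMonoOn hc₂.lo_lt_left.le hc₂.right_lt_hi.le fun η hη => ?_
    exact hΦ.pos _ (h₂.mem η (Ioo_subset_Ioo hc₂.lo_lt_left.le hc₂.right_lt_hi.le hη))
      (hc₂.above η hη)
  have gain_left : A + c₂ ^ 2 / 2 < u₂ c₁ + c₁ ^ 2 / 2 := by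
    simpa only [hc₂.apply_left] using energy (left_mem_Icc.2 hc₂.left_lt_right.le)
      (Ioo_subset_Icc_self hc) hc.1
  have gain_right : u₂ b₁ + b₁ ^ 2 / 2 < A + b₂ ^ 2 / 2 := by
    simpa only [hc₂.apply_right] using energy (Ioo_subset_Icc_self hb)
      (right_mem_Icc.2 hc₂.left_lt_right.le) hb.2
  have := hc₁.hi_sq_sub_hi_sq_le hc₂ h₁ h₂ hΦ hle
  have := hc₁.lo_sq_sub_lo_sq_le hc₂ h₁ h₂ hΦ hle
  have := hc₁.apply_left_le_apply_right_of_lt h₁ h₂ hΦ hlt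
  linarith [neg_sq p, neg_sq q]

theorem eq_of_symm (h₁ : IsFilippovArc Φ J (-p) p u₁) (h₂ : IsFilippovArc Φ J (-q) q u₂)
    (hΦ : IsFilippovCharacteristic Φ J A) : p = q ∧ u₁ = u₂ := by
  have h : u₁ = u₂ := h₁.eq_of_apply_eq h₂ hΦ h₁.zero_mem
    ((h₂.apply_zero_le_of_symm h₁ hΦ).antisymm (h₁.apply_zero_le_of_symm h₂ hΦ))
  exact ⟨(h₁.Icc_subset_Icc_of_le h₂ hΦ h.le).2.antisymm
    (h₂.Icc_subset_Icc_of_le h₁ hΦ h.ge).2, h⟩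

end IsFilippovArc

theorem IsFilippovArc.exists_symm (h₁ : IsFilippovArc Φ J lo p u₁)
    (h₂ : IsFilippovArc Φ J (-p) hi u₂) (hΦ : IsFilippovCharacteristic Φ J A)
    (h : -p ≤ lo ∧ hi ≤ p ∨ lo ≤ -p ∧ p ≤ hi) : ∃ u, IsFilippovArc Φ J (-p) p u := by
  rcases eq_or_ne lo (-p) with rfl | hlo
  · exact ⟨u₁, h₁⟩
  rcases eq_or_ne hi p with rfl | hhi
  · exact ⟨u₂, h₂⟩
  rcases h with ⟨hlo', hhi'⟩ | ⟨hlo', hhi'⟩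
  · exact absurd (h₂.lo_le_lo_of_hi_lt_hi h₁ hΦ (hhi'.lt_of_ne hhi)) (hlo'.lt_of_ne' hlo).not_ge
  · exact absurd (h₁.lo_le_lo_of_hi_lt_hi h₂ hΦ (hhi'.lt_of_ne' hhi)) (hlo'.lt_of_ne hlo).not_ge

theorem IsFilippovCharacteristic.exists_eq_singleton (hΦ : IsFilippovCharacteristic Φ J A)
    {R : Set ℝ} (hR : IsCompact R) (hne : R.Nonempty)
    (h₁ : ∀ r ∈ R, ∃ lo u, -lo ∈ R ∧ IsFilippovArc Φ J lo r u)
    (h₂ : ∀ r ∈ R, ∃ hi u, hi ∈ R ∧ IsFilippovArc Φ J (-r) hi u) :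
    ∃ p u, R = {p} ∧ IsFilippovArc Φ J (-p) p u := by
  obtain ⟨M, hM, hmax⟩ := hR.exists_isGreatest hne
  obtain ⟨m, hm, hmin⟩ := hR.exists_isLeast hne
  have hsymmM : ∃ u, IsFilippovArc Φ J (-M) M u := by
    obtain ⟨lo, u₁, hlo, hu₁⟩ := h₁ M hM
    obtain ⟨hi, u₂, hhi, hu₂⟩ := h₂ M hM
    exact hu₁.exists_symm hu₂ hΦ (.inl ⟨neg_le.1 (hmax hlo), hmax hhi⟩)
  have hsymmm : ∃ u, IsFilippovArc Φ J (-m) m u := by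
    obtain ⟨lo, u₁, hlo, hu₁⟩ := h₁ m hm
    obtain ⟨hi, u₂, hhi, hu₂⟩ := h₂ m hm
    exact hu₁.exists_symm hu₂ hΦ (.inr ⟨le_neg.1 (hmin hlo), hmin hhi⟩)
  obtain ⟨u, hu⟩ := hsymmM
  obtain ⟨v, hv⟩ := hsymmm
  obtain rfl := (hu.eq_of_symm hv hΦ).1
  exact ⟨M, u, hne.subset_singleton_iff.1 fun r hr => (hmax hr).antisymm (hmin hr), hu⟩

end FilippovArcs

section Potential

/-- The potential energy `G x = ∫₀ˣ g`. -/
noncomputable def potential (g : ℝ → ℝ) (x : ℝ) : ℝ :=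
  ∫ u in (0 : ℝ)..x, g u

/-- A restoring force on the strip `|x| < d`. -/
structure IsRestoringForce (g : ℝ → ℝ) (d : ℝ) : Prop where
  continuousOn : ContinuousOn g (Ioo (-d) d)
  odd : g.Odd
  pos : ∀ x ∈ Ioo 0 d, 0 < g x

variable {g : ℝ → ℝ} {d : ℝ}

theorem potential_zero : potential g 0 = 0 :=
  intervalIntegral.integral_same

theorem potential_neg (hg : g.Odd) (x : ℝ) : potential g (-x) = potential g x := by
  have h := intervalIntegral.integral_comp_neg (a := 0) (b := x) g
  simp only [hg _, intervalIntegral.integral_neg, neg_zero] at h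
  rw [potential, potential, intervalIntegral.integral_symm, ← h, neg_neg]

theorem hasStrictDerivAt_intervalIntegral_of_continuousOn_Ioo {f : ℝ → ℝ} {a b c x : ℝ}
    (hf : ContinuousOn f (Ioo a b)) (hc : c ∈ Ioo a b) (hx : x ∈ Ioo a b) :
    HasStrictDerivAt (fun x => ∫ u in c..x, f u) (f x) x :=
  intervalIntegral.integral_hasStrictDerivAt_right
    (hf.mono (ordConnected_Ioo.uIcc_subset hc hx)).intervalIntegrable
    (hf.stronglyMeasurableAtFilter isOpen_Ioo x hx) (hf.continuousAt (isOpen_Ioo.mem_nhds hx))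

namespace IsRestoringForce

theorem hasStrictDerivAt_potential (hg : IsRestoringForce g d) {x : ℝ} (hx : x ∈ Ioo (-d) d) :
    HasStrictDerivAt (potential g) (g x) x :=
  have hd : 0 < d := by linarith [hx.1, hx.2]
  hasStrictDerivAt_intervalIntegral_of_continuousOn_Ioo hg.continuousOn ⟨neg_neg_of_pos hd, hd⟩ hx

theorem continuousOn_potential (hg : IsRestoringForce g d) :
    ContinuousOn (potential g) (Ioo (-d) d) := fun _ hx =>
  (hg.hasStrictDerivAt_potential hx).hasDerivAt.continuousAt.continuousWithinAt

theorem strictMonoOn_potential (hg : IsRestoringForce g d) :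
    StrictMonoOn (potential g) (Ico 0 d) := by
  have hsub : Ico 0 d ⊆ Ioo (-d) d := fun x hx => ⟨by linarith [hx.1, hx.2], hx.2⟩
  refine strictMonoOn_of_hasDerivWithinAt_pos (convex_Ico 0 d) (hg.continuousOn_potential.mono hsub)
    (f' := g) ?_ ?_ <;> rw [interior_Ico]
  · exact fun x hx =>
      (hg.hasStrictDerivAt_potential (hsub (Ioo_subset_Ico_self hx))).hasDerivAt.hasDerivWithinAt
  · exact hg.pos

theorem potential_pos (hg : IsRestoringForce g d) {x : ℝ} (hx : |x| < d) (h0 : x ≠ 0) :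
    0 < potential g x := by
  have habs : potential g |x| = potential g x := by
    rcases abs_choice x with h | h <;> rw [h]
    exact potential_neg hg.odd x
  rw [← habs, ← potential_zero (g := g)]
  exact hg.strictMonoOn_potential ⟨le_rfl, (abs_nonneg x).trans_lt hx⟩ ⟨abs_nonneg x, hx⟩
    (abs_pos.2 h0)

theorem potential_nonneg (hg : IsRestoringForce g d) {x : ℝ} (hx : |x| < d) :
    0 ≤ potential g x := by
  rcases eq_or_ne x 0 with rfl | h0
  · exact potential_zero.ge
  · exact (hg.potential_pos hx h0).le

theorem eq_zero_of_apply_eq_zero (hg : IsRestoringForce g d) {x : ℝ} (hx : |x| < d)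
    (h0 : g x = 0) : x = 0 := by
  by_contra hne
  have hpos := hg.pos |x| ⟨abs_pos.2 hne, hx⟩
  rcases abs_choice x with h | h <;> rw [h] at hpos
  · exact hpos.ne' h0
  · rw [hg.odd, h0, neg_zero] at hpos
    exact hpos.false

end IsRestoringForce

end Potential

section Characteristic

/-- A damping function on the strip `|x| < d` as in the extended Lienard theorem, with `a` its only
positive zero there. -/
structure IsLienardDamping (F : ℝ → ℝ) (a d : ℝ) : Prop where
  exists_hasStrictDerivAt : ∀ x ∈ Ioo 0 d, ∃ F', HasStrictDerivAt F F' x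
  odd : F.Odd
  a_mem : a ∈ Ioo 0 d
  eq_zero_iff : ∀ x ∈ Ioo 0 d, F x = 0 ↔ x = a
  monotoneOn : MonotoneOn F (Ico a d)

/-- The damping `F` as a function `Φ = F ∘ G⁻¹` of the potential energy, where `G⁻¹` inverts
`potential g` on `[0, d)`. -/
noncomputable def filippov (F g : ℝ → ℝ) (d s : ℝ) : ℝ :=
  F (Function.invFunOn (potential g) (Ico 0 d) s)

variable {F g : ℝ → ℝ} {a d x : ℝ}

namespace IsLienardDamping

theorem pos_of_gt (hF : IsLienardDamping F a d) (hx : x ∈ Ioo a d) : 0 < F x := by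
  have hx0 : x ∈ Ioo 0 d := ⟨hF.a_mem.1.trans hx.1, hx.2⟩
  have ha : F a = 0 := (hF.eq_zero_iff a hF.a_mem).2 rfl
  refine (ha.ge.trans (hF.monotoneOn ⟨le_rfl, hF.a_mem.2⟩ ⟨hx.1.le, hx.2⟩ hx.1.le)).lt_of_ne' ?_
  exact fun h => hx.1.ne' ((hF.eq_zero_iff x hx0).1 h)

theorem neg_or_pos (hF : IsLienardDamping F a d) :
    (∀ x ∈ Ioo 0 a, F x < 0) ∨ ∀ x ∈ Ioo 0 a, 0 < F x := by
  by_contra! h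
  obtain ⟨⟨x, hx, hFx⟩, y, hy, hFy⟩ := h
  have hsub : Ioo 0 a ⊆ Ioo 0 d := Ioo_subset_Ioo_right hF.a_mem.2.le
  have hcont : ContinuousOn F (Ioo 0 a) := fun z hz =>
    have ⟨_, hF'⟩ := hF.exists_hasStrictDerivAt z (hsub hz)
    hF'.hasDerivAt.continuousAt.continuousWithinAt
  obtain ⟨z, hz, hFz⟩ := isPreconnected_Ioo.intermediate_value hy hx hcont ⟨hFy, hFx⟩
  exact hz.2.ne ((hF.eq_zero_iff z (hsub hz)).1 hFz)

end IsLienardDamping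

theorem filippov_potential (hg : IsRestoringForce g d) (hx : x ∈ Ico 0 d) :
    filippov F g d (potential g x) = F x :=
  congrArg F (hg.strictMonoOn_potential.injOn.leftInvOn_invFunOn hx)

theorem hasStrictDerivAt_filippov (hg : IsRestoringForce g d) {F' : ℝ} (hx : x ∈ Ioo 0 d)
    (hF' : HasStrictDerivAt F F' x) :
    HasStrictDerivAt (filippov F g d) (F' * (g x)⁻¹) (potential g x) := by
  have hinv : LeftInvOn (Function.invFunOn (potential g) (Ico 0 d)) (potential g) (Ico 0 d) :=
    hg.strictMonoOn_potential.injOn.leftInvOn_invFunOn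
  have hG : HasStrictDerivAt (potential g) (g x) x :=
    hg.hasStrictDerivAt_potential ⟨by linarith [hx.1, hx.2], hx.2⟩
  have hG' := hG.to_local_left_inverse (hg.pos x hx).ne'
    (by filter_upwards [Ico_mem_nhds hx.1 hx.2] with y hy using hinv hy)
  refine HasStrictDerivAt.comp (potential g x) ?_ hG'
  rwa [hinv (Ioo_subset_Ico_self hx)]

theorem isFilippovCharacteristic_filippov (hg : IsRestoringForce g d) (hF : IsLienardDamping F a d)
    (hneg : ∀ x ∈ Ioo 0 a, F x < 0) :
    IsFilippovCharacteristic (filippov F g d) (potential g '' Ioo 0 d) (potential g a) where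
  exists_hasStrictDerivAt := by
    rintro _ ⟨x, hx, rfl⟩
    obtain ⟨F', hF'⟩ := hF.exists_hasStrictDerivAt x hx
    exact ⟨_, hasStrictDerivAt_filippov hg hx hF'⟩
  pos_of_mem := by
    rintro _ ⟨x, hx, rfl⟩
    exact hg.potential_pos (abs_lt.2 ⟨by linarith [hx.1, hx.2], hx.2⟩) hx.1.ne'
  A_pos := hg.potential_pos (abs_lt.2 ⟨by linarith [hF.a_mem.1, hF.a_mem.2], hF.a_mem.2⟩)
    hF.a_mem.1.ne'
  neg := by
    rintro _ ⟨x, hx, rfl⟩ hlt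
    rw [filippov_potential hg (Ioo_subset_Ico_self hx)]
    exact hneg x ⟨hx.1, (hg.strictMonoOn_potential.lt_iff_lt (Ioo_subset_Ico_self hx)
      (Ioo_subset_Ico_self hF.a_mem)).1 hlt⟩
  pos := by
    rintro _ ⟨x, hx, rfl⟩ hlt
    rw [filippov_potential hg (Ioo_subset_Ico_self hx)]
    exact hF.pos_of_gt ⟨(hg.strictMonoOn_potential.lt_iff_lt (Ioo_subset_Ico_self hF.a_mem)
      (Ioo_subset_Ico_self hx)).1 hlt, hx.2⟩
  monotoneOn := by
    have le_iff {x y} (hx : x ∈ Ioo 0 d) (hy : y ∈ Ioo 0 d) :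
        potential g x ≤ potential g y ↔ x ≤ y :=
      hg.strictMonoOn_potential.le_iff_le (Ioo_subset_Ico_self hx) (Ioo_subset_Ico_self hy)
    rintro _ ⟨⟨x, hx, rfl⟩, hax⟩ _ ⟨⟨y, hy, rfl⟩, hay⟩ hxy
    rw [filippov_potential hg (Ioo_subset_Ico_self hx),
      filippov_potential hg (Ioo_subset_Ico_self hy)]
    exact hF.monotoneOn ⟨(le_iff hF.a_mem hx).1 hax, hx.2⟩ ⟨(le_iff hF.a_mem hy).1 hay, hy.2⟩
      ((le_iff hx hy).1 hxy)

end Characteristic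

section ClosedOrbits

/-- The solution `(x, y)` traces a closed orbit inside the strip `|x| < d`. -/
structure IsClosedOrbit (F g : ℝ → ℝ) (d : ℝ) (x y : ℝ → ℝ) : Prop where
  isSolution : IsSolution F g x y
  exists_period : ∃ T, 0 < T ∧ Function.Periodic x T ∧ Function.Periodic y T
  not_constant : ∃ t₁ t₂, x t₁ ≠ x t₂ ∨ y t₁ ≠ y t₂
  abs_fst_lt : ∀ t, |x t| < d

variable {F g x y : ℝ → ℝ} {a d : ℝ}

theorem eq_of_antitone_of_periodic {f : ℝ → ℝ} {T : ℝ} (hf : Antitone f) (hT : 0 < T)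
    (hp : Function.Periodic f T) (s t : ℝ) : f s = f t := by
  have key : ∀ s t, f s ≤ f t := by
    intro s t
    obtain ⟨s', hs', he⟩ := hp.exists_mem_Ico hT s t
    exact he.trans_le (hf hs'.1)
  exact (key s t).antisymm (key t s)

theorem IsRestoringForce.mul_nonneg_of_odd (hg : IsRestoringForce g d) (hF : F.Odd) {r s : ℝ}
    (hr : r ≤ d) (h : ∀ x ∈ Ioo 0 r, 0 ≤ F x) (hs : |s| < r) : 0 ≤ g s * F s := by
  have hpos : ∀ s, 0 < s → s < r → 0 ≤ g s * F s := fun s h0 hs =>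
    mul_nonneg (hg.pos s ⟨h0, hs.trans_le hr⟩).le (h s ⟨h0, hs⟩)
  rcases lt_trichotomy s 0 with h0 | rfl | h0
  · simpa [hF s, hg.odd s] using hpos (-s) (neg_pos.2 h0) (by rwa [← abs_of_neg h0])
  · simp [hF.map_zero]
  · exact hpos s h0 (by rwa [← abs_of_pos h0])

namespace IsClosedOrbit

theorem hasDerivAt_fst (h : IsClosedOrbit F g d x y) (t : ℝ) : HasDerivAt x (y t - F (x t)) t :=
  (h.isSolution t).1

theorem hasDerivAt_snd (h : IsClosedOrbit F g d x y) (t : ℝ) : HasDerivAt y (-g (x t)) t :=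
  (h.isSolution t).2

theorem continuous_fst (h : IsClosedOrbit F g d x y) : Continuous x :=
  continuous_iff_continuousAt.2 fun t => (h.hasDerivAt_fst t).continuousAt

theorem continuous_snd (h : IsClosedOrbit F g d x y) : Continuous y :=
  continuous_iff_continuousAt.2 fun t => (h.hasDerivAt_snd t).continuousAt

theorem neg (h : IsClosedOrbit F g d x y) (hF : F.Odd) (hg : g.Odd) :
    IsClosedOrbit F g d (-x) (-y) where
  isSolution t := by
    refine ⟨(h.hasDerivAt_fst t).neg.congr_deriv ?_, (h.hasDerivAt_snd t).neg.congr_deriv ?_⟩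
    · simp only [Pi.neg_apply, hF _]
      ring
    · simp only [Pi.neg_apply, hg _]
  exists_period := by
    obtain ⟨T, hT, hx, hy⟩ := h.exists_period
    exact ⟨T, hT, fun t => congrArg Neg.neg (hx t), fun t => congrArg Neg.neg (hy t)⟩
  not_constant := by simpa using h.not_constant
  abs_fst_lt := by simpa using h.abs_fst_lt

theorem reverse (h : IsClosedOrbit F g d x y) :
    IsClosedOrbit (-F) g d (fun t => x (-t)) fun t => -y (-t) where
  isSolution t := by
    refine ⟨((h.hasDerivAt_fst (-t)).comp t (hasDerivAt_neg t)).congr_deriv ?_,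
      ((h.hasDerivAt_snd (-t)).comp t (hasDerivAt_neg t)).neg.congr_deriv ?_⟩
    · simp only [Pi.neg_apply]
      ring
    · ring
  exists_period := by
    obtain ⟨T, hT, hx, hy⟩ := h.exists_period
    refine ⟨T, hT, fun t => ?_, fun t => ?_⟩
    · simp only [neg_add, ← sub_eq_add_neg, hx.sub_eq]
    · simp only [neg_add, ← sub_eq_add_neg, hy.sub_eq]
  not_constant := by
    obtain ⟨t₁, t₂, h⟩ := h.not_constant
    exact ⟨-t₁, -t₂, by simpa using h⟩
  abs_fst_lt t := h.abs_fst_lt (-t)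

theorem hasDerivAt_energy (h : IsClosedOrbit F g d x y) (hg : IsRestoringForce g d) (t : ℝ) :
    HasDerivAt (fun t => potential g (x t) + y t ^ 2 / 2) (-(g (x t) * F (x t))) t := by
  have hG := (hg.hasStrictDerivAt_potential (abs_lt.1 (h.abs_fst_lt t))).hasDerivAt
  refine ((hG.comp t (h.hasDerivAt_fst t)).add
    (((h.hasDerivAt_snd t).pow 2).div_const 2)).congr_deriv ?_
  simp only [Nat.cast_ofNat, Nat.add_one_sub_one, pow_one]
  ring

theorem not_forall_fst_eq (h : IsClosedOrbit F g d x y) : ¬∃ c, ∀ t, x t = c := by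
  rintro ⟨c, hc⟩
  have hy : ∀ t, y t = F c := by
    intro t
    have hconst : HasDerivAt x 0 t := by
      rw [funext hc]
      exact hasDerivAt_const t c
    have := (h.hasDerivAt_fst t).unique hconst
    rwa [hc, sub_eq_zero] at this
  obtain ⟨t₁, t₂, hne⟩ := h.not_constant
  simp [hc, hy] at hne

theorem not_of_damping_nonneg (hg : IsRestoringForce g d) (hF : F.Odd)
    (hpos : ∀ x ∈ Ioo 0 d, 0 ≤ F x) (hzero : {x ∈ Ioo (-d) d | F x = 0}.Countable) :
    ¬IsClosedOrbit F g d x y := by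
  intro h
  obtain ⟨T, hT, hx, hy⟩ := h.exists_period
  have hanti : Antitone fun t => potential g (x t) + y t ^ 2 / 2 :=
    antitone_of_hasDerivAt_nonpos (h.hasDerivAt_energy hg) fun t =>
      neg_nonpos.2 (hg.mul_nonneg_of_odd hF le_rfl hpos (h.abs_fst_lt t))
  have hconst := eq_of_antitone_of_periodic hanti hT fun t => by simp only [hx t, hy t]
  have hFx : ∀ t, F (x t) = 0 := by
    intro t
    have hE := (h.hasDerivAt_energy hg t).unique
      ((hasDerivAt_const t _).congr_of_eventuallyEq (.of_forall fun s => hconst s 0))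
    rcases mul_eq_zero.1 (neg_eq_zero.1 hE) with h0 | h0
    · rw [hg.eq_zero_of_apply_eq_zero (h.abs_fst_lt t) h0, hF.map_zero]
    · exact h0
  have hsub : (range x).Subsingleton := by
    refine (hzero.mono ?_).isTotallyDisconnected (range x) Subset.rfl
      (isPreconnected_range h.continuous_fst)
    rintro _ ⟨t, rfl⟩
    exact ⟨abs_lt.1 (h.abs_fst_lt t), hFx t⟩
  exact h.not_forall_fst_eq ⟨x 0, fun t => hsub (mem_range_self t) (mem_range_self 0)⟩

theorem energy_eq_zero_of_ge (h : IsClosedOrbit F g d x y) (hg : IsRestoringForce g d)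
    (hF : F.Odd) (ha : a ∈ Ioo 0 d) (hpos : ∀ x ∈ Ioo 0 a, 0 ≤ F x) {t₀ t : ℝ}
    (h0 : potential g (x t₀) + y t₀ ^ 2 / 2 = 0) (ht : t₀ ≤ t) :
    potential g (x t) + y t ^ 2 / 2 = 0 := by
  have hcont : Continuous fun t => potential g (x t) + y t ^ 2 / 2 :=
    continuous_iff_continuousAt.2 fun t => (h.hasDerivAt_energy hg t).continuousAt
  have hnonneg : ∀ t, 0 ≤ potential g (x t) := fun t => hg.potential_nonneg (h.abs_fst_lt t)
  refine ((isClosed_eq hcont continuous_const).inter isClosed_Icc :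
    IsClosed ({t | potential g (x t) + y t ^ 2 / 2 = 0} ∩ Icc t₀ t))
      |>.Icc_subset_of_forall_mem_nhdsWithin h0 ?_ ⟨ht, le_rfl⟩
  rintro s ⟨hs : potential g (x s) + y s ^ 2 / 2 = 0, -⟩
  have hxs : x s = 0 := by
    by_contra hne
    linarith [hg.potential_pos (h.abs_fst_lt s) hne, sq_nonneg (y s)]
  have hnear : ∀ᶠ r in 𝓝 s, |x r| < a :=
    h.continuous_fst.abs.continuousAt.eventually_lt_const (by simpa [hxs] using ha.1)
  obtain ⟨ε, hε, hball⟩ := Metric.eventually_nhds_iff_ball.1 hnear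
  have hanti : AntitoneOn (fun t => potential g (x t) + y t ^ 2 / 2) (Metric.ball s ε) := by
    refine antitoneOn_of_hasDerivWithinAt_nonpos (convex_ball s ε) hcont.continuousOn
      (f' := fun r => -(g (x r) * F (x r))) ?_ ?_ <;> rw [Metric.isOpen_ball.interior_eq]
    · exact fun r _ => (h.hasDerivAt_energy hg r).hasDerivWithinAt
    · exact fun r hr => neg_nonpos.2 (hg.mul_nonneg_of_odd hF ha.2.le hpos (hball r hr))
  filter_upwards [mem_nhdsWithin_of_mem_nhds (Metric.ball_mem_nhds s hε), self_mem_nhdsWithin]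
    with r hr hsr
  refine le_antisymm ((hanti (Metric.mem_ball_self hε) hr (le_of_lt hsr)).trans_eq hs) ?_
  have := hnonneg r
  positivity

theorem snd_ne_zero_of_fst_eq_zero (h : IsClosedOrbit F g d x y) (hg : IsRestoringForce g d)
    (hF : F.Odd) (ha : a ∈ Ioo 0 d) (hneg : ∀ x ∈ Ioo 0 a, F x ≤ 0) {t : ℝ} (ht : x t = 0) :
    y t ≠ 0 := by
  intro hyt
  obtain ⟨T, hT, hx, -⟩ := h.exists_period
  have hfst : ∀ s, x s = 0 := by
    intro s
    obtain ⟨r, hr, hrs⟩ := hx.exists_mem_Ico hT s (t - T)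
    have hE := h.reverse.energy_eq_zero_of_ge hg (fun x => congrArg Neg.neg (hF x)) ha
      (fun x hx => neg_nonneg.2 (hneg x hx)) (t₀ := -t) (t := -r)
      (by simp [ht, hyt, potential_zero]) (neg_le_neg (by linarith [hr.2]))
    rw [neg_neg] at hE
    by_contra hne
    rw [hrs] at hne
    linarith [hg.potential_pos (h.abs_fst_lt r) hne, sq_nonneg (-y r)]
  exact h.not_forall_fst_eq ⟨0, hfst⟩

end IsClosedOrbit

/-- An excursion of `x` into the right half-plane, during the time interval `[t₀, t₁]`. -/
structure IsExcursion (x : ℝ → ℝ) (t₀ t₁ : ℝ) : Prop where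
  lt : t₀ < t₁
  left_eq_zero : x t₀ = 0
  right_eq_zero : x t₁ = 0
  pos : ∀ t ∈ Ioo t₀ t₁, 0 < x t

namespace IsExcursion

variable {t₀ t₁ : ℝ}

theorem comp_neg (h : IsExcursion x t₀ t₁) : IsExcursion (fun t => x (-t)) (-t₁) (-t₀) where
  lt := neg_lt_neg h.lt
  left_eq_zero := by rw [neg_neg, h.right_eq_zero]
  right_eq_zero := by rw [neg_neg, h.left_eq_zero]
  pos t ht := h.pos (-t) ⟨lt_neg_of_lt_neg ht.2, neg_lt_of_neg_lt ht.1⟩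

theorem nonneg (h : IsExcursion x t₀ t₁) {t : ℝ} (ht : t ∈ Icc t₀ t₁) : 0 ≤ x t := by
  rcases eq_endpoints_or_mem_Ioo_of_mem_Icc ht with rfl | rfl | ht
  exacts [h.left_eq_zero.ge, h.right_eq_zero.ge, (h.pos t ht).le]

theorem exists_mem_Ioo (hx : Continuous x) {l r t : ℝ} (hl : l < t) (hr : t < r) (hxl : x l = 0)
    (hxr : x r = 0) (ht : 0 < x t) : ∃ t₀ t₁, IsExcursion x t₀ t₁ ∧ t ∈ Ioo t₀ t₁ := by
  have hclosed : IsClosed {s | x s = 0} := isClosed_eq hx continuous_const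
  obtain ⟨t₀, ⟨ht₀, hmem₀⟩, hmax⟩ :=
    (isCompact_Icc.inter_right hclosed).exists_isGreatest ⟨l, ⟨le_rfl, hl.le⟩, hxl⟩
  obtain ⟨t₁, ⟨ht₁, hmem₁⟩, hmin⟩ :=
    (isCompact_Icc.inter_right hclosed).exists_isLeast ⟨r, ⟨hr.le, le_rfl⟩, hxr⟩
  have hne₀ : t₀ ≠ t := fun h => ht.ne' (h ▸ hmem₀)
  have hne₁ : t ≠ t₁ := fun h => ht.ne' (h ▸ hmem₁)
  have htmem : t ∈ Ioo t₀ t₁ := ⟨ht₀.2.lt_of_ne hne₀, ht₁.1.lt_of_ne hne₁⟩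
  have hne : ∀ s ∈ Ioo t₀ t₁, x s ≠ 0 := by
    intro s hs h0
    rcases le_total s t with hst | hts
    · exact (hmax ⟨⟨ht₀.1.trans hs.1.le, hst⟩, h0⟩).not_gt hs.1
    · exact (hmin ⟨⟨hts, hs.2.le.trans ht₁.2⟩, h0⟩).not_gt hs.2
  refine ⟨t₀, t₁, ⟨htmem.1.trans htmem.2, hmem₀, hmem₁, fun s hs => ?_⟩, htmem⟩
  by_contra! hxs
  obtain ⟨z, hz, hxz⟩ :=
    isPreconnected_Ioo.intermediate_value hs htmem hx.continuousOn ⟨hxs, ht.le⟩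
  exact hne z hz hxz

theorem exists_left_eq (hx : Continuous x) {s r : ℝ} (hs : x s = 0)
    (hpos : ∀ᶠ t in 𝓝[>] s, 0 < x t) (hsr : s < r) (hr : x r = 0) :
    ∃ t₁, IsExcursion x s t₁ := by
  obtain ⟨b, hb : s < b, hsub⟩ := mem_nhdsGT_iff_exists_Ioo_subset.1 hpos
  obtain ⟨t, hst, htb⟩ := exists_between hb
  have hbr : b ≤ r := not_lt.1 fun h => (hsub ⟨hsr, h⟩ : 0 < x r).ne' hr
  obtain ⟨t₀, t₁, h, ht⟩ := exists_mem_Ioo hx hst (htb.trans_le hbr) hs hr (hsub ⟨hst, htb⟩)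
  have hs₀ : s ≤ t₀ := not_lt.1 fun hlt => (h.pos s ⟨hlt, hst.trans ht.2⟩).ne' hs
  have h₀s : t₀ ≤ s := not_lt.1 fun hlt =>
    (hsub ⟨hlt, ht.1.trans htb⟩ : 0 < x t₀).ne' h.left_eq_zero
  exact ⟨t₁, h₀s.antisymm hs₀ ▸ h⟩

end IsExcursion

namespace IsClosedOrbit

theorem exists_fst_eq_zero (h : IsClosedOrbit F g d x y) (hg : IsRestoringForce g d) :
    ∃ t, x t = 0 := by
  obtain ⟨T, hT, -, hy⟩ := h.exists_period
  obtain ⟨_, ⟨t, rfl⟩, hmax⟩ :=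
    (hy.compact_of_continuous hT.ne' h.continuous_snd).exists_isGreatest (range_nonempty y)
  have hloc : IsLocalMax y t := .of_forall fun s => hmax (mem_range_self s)
  exact ⟨t, hg.eq_zero_of_apply_eq_zero (h.abs_fst_lt t)
    (neg_eq_zero.1 (hloc.hasDerivAt_eq_zero (h.hasDerivAt_snd t)))⟩

theorem exists_gt_fst_eq_zero (h : IsClosedOrbit F g d x y) (hg : IsRestoringForce g d) (t : ℝ) :
    ∃ r, t < r ∧ x r = 0 := by
  obtain ⟨T, hT, hx, -⟩ := h.exists_period
  obtain ⟨s, hs⟩ := h.exists_fst_eq_zero hg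
  obtain ⟨r, hr, he⟩ := hx.exists_mem_Ioc hT s t
  exact ⟨r, hr.1, he ▸ hs⟩

theorem exists_lt_fst_eq_zero (h : IsClosedOrbit F g d x y) (hg : IsRestoringForce g d) (t : ℝ) :
    ∃ l, l < t ∧ x l = 0 := by
  obtain ⟨r, hr, hx⟩ := h.reverse.exists_gt_fst_eq_zero hg (-t)
  exact ⟨-r, neg_lt_of_neg_lt hr, hx⟩

theorem hasDerivAt_fst_of_fst_eq_zero (h : IsClosedOrbit F g d x y) (hF : F.Odd) {t : ℝ}
    (ht : x t = 0) : HasDerivAt x (y t) t :=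
  (h.hasDerivAt_fst t).congr_deriv (by rw [ht, hF.map_zero, sub_zero])

theorem exists_isExcursion_of_snd_pos (h : IsClosedOrbit F g d x y) (hg : IsRestoringForce g d)
    (hF : F.Odd) {t : ℝ} (ht : x t = 0) (hyt : 0 < y t) : ∃ t₁, IsExcursion x t t₁ := by
  have hderiv := h.hasDerivAt_fst_of_fst_eq_zero hF ht
  have hsign := eventually_nhdsWithin_sign_eq_of_deriv_pos (hderiv.deriv ▸ hyt) ht
  obtain ⟨r, hr, hxr⟩ := h.exists_gt_fst_eq_zero hg t
  refine IsExcursion.exists_left_eq h.continuous_fst ht ?_ hr hxr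
  filter_upwards [hsign.filter_mono nhdsWithin_le_nhds, self_mem_nhdsWithin] with s hs hts
  rwa [sign_pos (sub_pos.2 hts), sign_eq_one_iff] at hs

theorem exists_isExcursion_of_snd_neg (h : IsClosedOrbit F g d x y) (hg : IsRestoringForce g d)
    (hF : F.Odd) {t : ℝ} (ht : x t = 0) (hyt : y t < 0) : ∃ t₀, IsExcursion x t₀ t := by
  have hF' : (-F).Odd := fun x => congrArg Neg.neg (hF x)
  obtain ⟨t₁, he⟩ := h.reverse.exists_isExcursion_of_snd_pos hg hF' (t := -t)
    (by rwa [neg_neg]) (by rwa [neg_neg, neg_pos])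
  exact ⟨-t₁, by simpa using he.comp_neg⟩

theorem snd_nonneg_of_isExcursion (h : IsClosedOrbit F g d x y) (hF : F.Odd) {t₀ t₁ : ℝ}
    (he : IsExcursion x t₀ t₁) : 0 ≤ y t₀ := by
  have hderiv := (h.hasDerivAt_fst_of_fst_eq_zero hF he.left_eq_zero).hasDerivWithinAt
    (s := Ioi t₀)
  refine ge_of_tendsto (hasDerivWithinAt_iff_tendsto_slope' self_notMem_Ioi |>.1 hderiv) ?_
  filter_upwards [Ioo_mem_nhdsGT he.lt] with t ht
  rw [slope_def_field, he.left_eq_zero, sub_zero]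
  exact div_nonneg (he.pos t ht).le (sub_nonneg.2 ht.1.le)

theorem snd_nonpos_of_isExcursion (h : IsClosedOrbit F g d x y) (hF : F.Odd) {t₀ t₁ : ℝ}
    (he : IsExcursion x t₀ t₁) : y t₁ ≤ 0 := by
  have hF' : (-F).Odd := fun x => congrArg Neg.neg (hF x)
  simpa using h.reverse.snd_nonneg_of_isExcursion hF' he.comp_neg

theorem strictAntiOn_snd (h : IsClosedOrbit F g d x y) (hg : IsRestoringForce g d) {t₀ t₁ : ℝ}
    (he : IsExcursion x t₀ t₁) : StrictAntiOn y (Icc t₀ t₁) := by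
  refine strictAntiOn_of_hasDerivWithinAt_neg (convex_Icc t₀ t₁) h.continuous_snd.continuousOn
    (f' := fun t => -g (x t)) ?_ ?_ <;> rw [interior_Icc]
  · exact fun t _ => (h.hasDerivAt_snd t).hasDerivWithinAt
  · exact fun t ht => neg_neg_of_pos (hg.pos _ ⟨he.pos t ht, (abs_lt.1 (h.abs_fst_lt t)).2⟩)

theorem snd_mem_Icc (h : IsClosedOrbit F g d x y) (hg : IsRestoringForce g d) {t₀ t₁ t : ℝ}
    (he : IsExcursion x t₀ t₁) (ht : t ∈ Icc t₀ t₁) : y t ∈ Icc (y t₁) (y t₀) :=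
  have hanti := (h.strictAntiOn_snd hg he).antitoneOn
  ⟨hanti ht (right_mem_Icc.2 he.lt.le) ht.2, hanti (left_mem_Icc.2 he.lt.le) ht ht.1⟩

theorem hasStrictDerivAt_snd (h : IsClosedOrbit F g d x y) (hg : IsRestoringForce g d) (t : ℝ) :
    HasStrictDerivAt y (-g (x t)) t := by
  have hcont : ContinuousAt (fun t => -g (x t)) t :=
    ((hg.continuousOn.continuousAt (isOpen_Ioo.mem_nhds (abs_lt.1 (h.abs_fst_lt t)))).comp
      h.continuous_fst.continuousAt).neg
  exact hasStrictDerivAt_of_hasDerivAt_of_continuousAt (.of_forall h.hasDerivAt_snd) hcont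

theorem mem_Ioo_of_isExcursion (h : IsClosedOrbit F g d x y) {t₀ t₁ t : ℝ}
    (he : IsExcursion x t₀ t₁) (ht : t ∈ Ioo t₀ t₁) : x t ∈ Ioo 0 d :=
  ⟨he.pos t ht, (abs_lt.1 (h.abs_fst_lt t)).2⟩

theorem exists_excursionTime (h : IsClosedOrbit F g d x y) (hg : IsRestoringForce g d) {t₀ t₁ : ℝ}
    (he : IsExcursion x t₀ t₁) :
    ∃ τ : ℝ → ℝ, ContinuousOn τ (Icc (y t₁) (y t₀)) ∧ LeftInvOn τ y (Icc t₀ t₁) ∧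
      ∀ s ∈ Ioo (y t₁) (y t₀),
        τ s ∈ Ioo t₀ t₁ ∧ y (τ s) = s ∧ HasDerivAt τ (-g (x (τ s)))⁻¹ s := by
  have hanti := h.strictAntiOn_snd hg he
  have hy : y t₁ < y t₀ :=
    hanti (left_mem_Icc.2 he.lt.le) (right_mem_Icc.2 he.lt.le) he.lt
  obtain ⟨τ, hτ, hτ₀, hτ₁, hτd⟩ := exists_leftInv_hasDerivAt (p := t₀) (q := t₁)
    h.continuous_snd.continuousOn (uIcc_of_le he.lt.le ▸ hanti.injOn)
    (fun t _ => h.hasStrictDerivAt_snd hg t)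
    (by
      rw [uIoo_of_le he.lt.le]
      exact fun t ht => neg_ne_zero.2 (hg.pos _ (h.mem_Ioo_of_isExcursion he ht)).ne')
  rw [uIcc_of_ge hy.le] at hτ
  rw [uIoo_of_ge hy.le, uIoo_of_le he.lt.le] at hτd
  refine ⟨τ, hτ, fun t ht => ?_, hτd⟩
  rcases eq_endpoints_or_mem_Ioo_of_mem_Icc ht with rfl | rfl | ht'
  · exact hτ₀
  · exact hτ₁
  · obtain ⟨hmem, hinv, -⟩ := hτd (y t)
      ⟨hanti ht (right_mem_Icc.2 he.lt.le) ht'.2, hanti (left_mem_Icc.2 he.lt.le) ht ht'.1⟩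
    exact hanti.injOn (Ioo_subset_Icc_self hmem) ht hinv

theorem snd_pos_of_isExcursion (h : IsClosedOrbit F g d x y) (hg : IsRestoringForce g d)
    (hF : F.Odd) (ha : a ∈ Ioo 0 d) (hneg : ∀ x ∈ Ioo 0 a, F x ≤ 0) {t₀ t₁ : ℝ}
    (he : IsExcursion x t₀ t₁) : 0 < y t₀ :=
  (h.snd_nonneg_of_isExcursion hF he).lt_of_ne'
    (h.snd_ne_zero_of_fst_eq_zero hg hF ha hneg he.left_eq_zero)

theorem snd_neg_of_isExcursion (h : IsClosedOrbit F g d x y) (hg : IsRestoringForce g d)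
    (hF : F.Odd) (ha : a ∈ Ioo 0 d) (hneg : ∀ x ∈ Ioo 0 a, F x ≤ 0) {t₀ t₁ : ℝ}
    (he : IsExcursion x t₀ t₁) : y t₁ < 0 :=
  (h.snd_nonpos_of_isExcursion hF he).lt_of_ne
    (h.snd_ne_zero_of_fst_eq_zero hg hF ha hneg he.right_eq_zero)

theorem exists_isFilippovArc (h : IsClosedOrbit F g d x y) (hg : IsRestoringForce g d)
    (hF : F.Odd) (ha : a ∈ Ioo 0 d) (hneg : ∀ x ∈ Ioo 0 a, F x ≤ 0) {t₀ t₁ : ℝ}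
    (he : IsExcursion x t₀ t₁) :
    ∃ u, IsFilippovArc (filippov F g d) (potential g '' Ioo 0 d) (y t₁) (y t₀) u ∧
      ∀ t ∈ Icc t₀ t₁, u (y t) = potential g (x t) := by
  have hy₀ := h.snd_pos_of_isExcursion hg hF ha hneg he
  have hy₁ := h.snd_neg_of_isExcursion hg hF ha hneg he
  obtain ⟨τ, hτ, hinv, hτd⟩ := h.exists_excursionTime hg he
  have hmem : ∀ s ∈ Ioo (y t₁) (y t₀), x (τ s) ∈ Ioo 0 d := fun s hs =>
    h.mem_Ioo_of_isExcursion he (hτd s hs).1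
  have hend : ∀ s ∈ ({y t₁, y t₀} : Set ℝ), potential g (x (τ s)) = 0 := by
    rintro _ (rfl | rfl)
    · rw [hinv (right_mem_Icc.2 he.lt.le), he.right_eq_zero, potential_zero]
    · rw [hinv (left_mem_Icc.2 he.lt.le), he.left_eq_zero, potential_zero]
  set u : ℝ → ℝ := (Ioo (y t₁) (y t₀)).indicator fun s => potential g (x (τ s)) with hu
  have hval : ∀ s ∈ Icc (y t₁) (y t₀), u s = potential g (x (τ s)) := by
    intro s hs
    rcases eq_endpoints_or_mem_Ioo_of_mem_Icc hs with rfl | rfl | hs'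
    · rw [hend _ (by simp), hu, indicator_of_notMem left_notMem_Ioo]
    · rw [hend _ (by simp), hu, indicator_of_notMem right_notMem_Ioo]
    · exact indicator_of_mem hs' _
  refine ⟨u, ⟨hy₁, hy₀, ?_, fun s hs => indicator_of_notMem hs _, fun s hs => ?_, fun s hs => ?_⟩,
    fun t ht => ?_⟩
  · refine continuous_indicator (by rwa [frontier_Ioo (hy₁.trans hy₀)]) ?_
    rw [closure_Ioo (hy₁.trans hy₀).ne]
    exact hg.continuousOn_potential.comp (h.continuous_fst.comp_continuousOn hτ)
      fun s _ => abs_lt.1 (h.abs_fst_lt _)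
  · exact hval s (Ioo_subset_Icc_self hs) ▸ mem_image_of_mem _ (hmem s hs)
  · obtain ⟨-, hyτ, hder⟩ := hτd s hs
    have hG := (hg.hasStrictDerivAt_potential (abs_lt.1 (h.abs_fst_lt (τ s)))).hasDerivAt
    have hg0 := (hg.pos _ (hmem s hs)).ne'
    rw [hval s (Ioo_subset_Icc_self hs), filippov_potential hg (Ioo_subset_Ico_self (hmem s hs))]
    refine (((hG.comp (τ s) (h.hasDerivAt_fst (τ s))).comp s hder).congr_of_eventuallyEq
      (eventually_of_mem (Icc_mem_nhds hs.1 hs.2) hval)).congr_deriv ?_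
    rw [hyτ]
    field_simp
    ring
  · rw [hval (y t) (h.snd_mem_Icc hg he ht), hinv ht]

end IsClosedOrbit

/-- The distances from the origin at which the curve `(x, y)` crosses the `y`-axis. -/
def crossingRadii (x y : ℝ → ℝ) : Set ℝ :=
  {r | ∃ t, x t = 0 ∧ |y t| = r}

theorem crossingRadii_neg : crossingRadii (-x) (-y) = crossingRadii x y := by
  simp [crossingRadii]

namespace IsClosedOrbit

theorem isCompact_crossingRadii (h : IsClosedOrbit F g d x y) : IsCompact (crossingRadii x y) := by
  obtain ⟨T, hT, hx, hy⟩ := h.exists_period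
  have hrange : IsCompact (range fun t => (x t, y t)) :=
    Function.Periodic.compact_of_continuous (fun t => by simp only [hx t, hy t]) hT.ne'
      (h.continuous_fst.prodMk h.continuous_snd)
  have himage : crossingRadii x y =
      (fun p : ℝ × ℝ => |p.2|) '' (range (fun t => (x t, y t)) ∩ {p | p.1 = 0}) := by
    ext r
    simp [crossingRadii]
  rw [himage]
  exact (hrange.inter_right (isClosed_eq (by fun_prop) continuous_const)).image (by fun_prop)

theorem exists_isFilippovArc_of_crossing_pos (h : IsClosedOrbit F g d x y)
    (hg : IsRestoringForce g d) (hF : F.Odd) (ha : a ∈ Ioo 0 d) (hneg : ∀ x ∈ Ioo 0 a, F x ≤ 0)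
    {t : ℝ} (ht : x t = 0) (hyt : 0 < y t) :
    ∃ lo u, -lo ∈ crossingRadii x y ∧
      IsFilippovArc (filippov F g d) (potential g '' Ioo 0 d) lo (y t) u := by
  obtain ⟨t₁, he⟩ := h.exists_isExcursion_of_snd_pos hg hF ht hyt
  obtain ⟨u, hu, -⟩ := h.exists_isFilippovArc hg hF ha hneg he
  exact ⟨y t₁, u, ⟨t₁, he.right_eq_zero, abs_of_neg hu.lo_neg⟩, hu⟩

theorem exists_isFilippovArc_of_crossing_neg (h : IsClosedOrbit F g d x y)
    (hg : IsRestoringForce g d) (hF : F.Odd) (ha : a ∈ Ioo 0 d) (hneg : ∀ x ∈ Ioo 0 a, F x ≤ 0)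
    {t : ℝ} (ht : x t = 0) (hyt : y t < 0) :
    ∃ hi u, hi ∈ crossingRadii x y ∧
      IsFilippovArc (filippov F g d) (potential g '' Ioo 0 d) (y t) hi u := by
  obtain ⟨t₀, he⟩ := h.exists_isExcursion_of_snd_neg hg hF ht hyt
  obtain ⟨u, hu, -⟩ := h.exists_isFilippovArc hg hF ha hneg he
  exact ⟨y t₀, u, ⟨t₀, he.left_eq_zero, abs_of_pos hu.hi_pos⟩, hu⟩

theorem exists_crossingRadii_eq_singleton (h : IsClosedOrbit F g d x y)
    (hg : IsRestoringForce g d) (hF : IsLienardDamping F a d) (hneg : ∀ x ∈ Ioo 0 a, F x < 0) :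
    ∃ p u, crossingRadii x y = {p} ∧
      IsFilippovArc (filippov F g d) (potential g '' Ioo 0 d) (-p) p u := by
  have hneg' : ∀ x ∈ Ioo 0 a, F x ≤ 0 := fun x hx => (hneg x hx).le
  have hn := h.neg hF.odd hg.odd
  have hne : (crossingRadii x y).Nonempty :=
    have ⟨t, ht⟩ := h.exists_fst_eq_zero hg
    ⟨|y t|, t, ht, rfl⟩
  refine (isFilippovCharacteristic_filippov hg hF hneg).exists_eq_singleton
    h.isCompact_crossingRadii hne ?_ ?_
  all_goals
    rintro _ ⟨t, ht, rfl⟩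
    have htn : (-x) t = 0 := neg_eq_zero.2 ht
    rcases (h.snd_ne_zero_of_fst_eq_zero hg hF.odd hF.a_mem hneg' ht).lt_or_gt with hy | hy
  · rw [abs_of_neg hy, ← crossingRadii_neg]
    exact hn.exists_isFilippovArc_of_crossing_pos hg hF.odd hF.a_mem hneg' htn (neg_pos.2 hy)
  · rw [abs_of_pos hy]
    exact h.exists_isFilippovArc_of_crossing_pos hg hF.odd hF.a_mem hneg' ht hy
  · rw [abs_of_neg hy, neg_neg]
    exact h.exists_isFilippovArc_of_crossing_neg hg hF.odd hF.a_mem hneg' ht hy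
  · rw [abs_of_pos hy, ← crossingRadii_neg]
    exact hn.exists_isFilippovArc_of_crossing_neg hg hF.odd hF.a_mem hneg' htn (neg_neg_of_pos hy)

theorem exists_symm_isFilippovArc (h : IsClosedOrbit F g d x y) (hg : IsRestoringForce g d)
    (hF : IsLienardDamping F a d) (hneg : ∀ x ∈ Ioo 0 a, F x < 0) :
    ∃ p u, IsFilippovArc (filippov F g d) (potential g '' Ioo 0 d) (-p) p u ∧
      ∀ t₀ t₁, IsExcursion x t₀ t₁ →
        y t₁ = -p ∧ y t₀ = p ∧ ∀ t ∈ Icc t₀ t₁, u (y t) = potential g (x t) := by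
  obtain ⟨p, u, hR, hu⟩ := h.exists_crossingRadii_eq_singleton hg hF hneg
  have hradius : ∀ t, x t = 0 → |y t| = p := fun t ht =>
    (hR.subset ⟨t, ht, rfl⟩ : |y t| ∈ ({p} : Set ℝ))
  refine ⟨p, u, hu, fun t₀ t₁ he => ?_⟩
  obtain ⟨v, hv, hvy⟩ := h.exists_isFilippovArc hg hF.odd hF.a_mem (fun x hx => (hneg x hx).le) he
  have hy₀ : y t₀ = p := by rw [← hradius t₀ he.left_eq_zero, abs_of_pos hv.hi_pos]
  have hy₁ : y t₁ = -p := by rw [← hradius t₁ he.right_eq_zero, abs_of_neg hv.lo_neg, neg_neg]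
  rw [hy₀, hy₁] at hv
  obtain rfl := (hu.eq_of_symm hv (isFilippovCharacteristic_filippov hg hF hneg)).2
  exact ⟨hy₁, hy₀, hvy⟩

theorem exists_isExcursion_of_fst_nonneg (h : IsClosedOrbit F g d x y)
    (hg : IsRestoringForce g d) (hF : F.Odd) (ha : a ∈ Ioo 0 d) (hneg : ∀ x ∈ Ioo 0 a, F x ≤ 0)
    {t : ℝ} (ht : 0 ≤ x t) : ∃ t₀ t₁, IsExcursion x t₀ t₁ ∧ t ∈ Icc t₀ t₁ := by
  rcases ht.eq_or_lt' with h0 | hpos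
  · rcases (h.snd_ne_zero_of_fst_eq_zero hg hF ha hneg h0).lt_or_gt with hy | hy
    · obtain ⟨t₀, he⟩ := h.exists_isExcursion_of_snd_neg hg hF h0 hy
      exact ⟨t₀, t, he, right_mem_Icc.2 he.lt.le⟩
    · obtain ⟨t₁, he⟩ := h.exists_isExcursion_of_snd_pos hg hF h0 hy
      exact ⟨t, t₁, he, left_mem_Icc.2 he.lt.le⟩
  · obtain ⟨l, hl, hxl⟩ := h.exists_lt_fst_eq_zero hg t
    obtain ⟨r, hr, hxr⟩ := h.exists_gt_fst_eq_zero hg t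
    obtain ⟨t₀, t₁, he, hmem⟩ := IsExcursion.exists_mem_Ioo h.continuous_fst hl hr hxl hxr hpos
    exact ⟨t₀, t₁, he, Ioo_subset_Icc_self hmem⟩

variable {x₁ y₁ x₂ y₂ : ℝ → ℝ}

theorem mem_range_of_fst_nonneg (h₁ : IsClosedOrbit F g d x₁ y₁) (h₂ : IsClosedOrbit F g d x₂ y₂)
    (hg : IsRestoringForce g d) (hF : IsLienardDamping F a d) (hneg : ∀ x ∈ Ioo 0 a, F x < 0)
    {t : ℝ} (ht : 0 ≤ x₁ t) : (x₁ t, y₁ t) ∈ range fun s => (x₂ s, y₂ s) := by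
  have hneg' : ∀ x ∈ Ioo 0 a, F x ≤ 0 := fun x hx => (hneg x hx).le
  obtain ⟨t₀, t₁, he₁, ht'⟩ := h₁.exists_isExcursion_of_fst_nonneg hg hF.odd hF.a_mem hneg' ht
  obtain ⟨r, hr⟩ := h₂.exists_fst_eq_zero hg
  obtain ⟨s₀, s₁, he₂, -⟩ := h₂.exists_isExcursion_of_fst_nonneg hg hF.odd hF.a_mem hneg' hr.ge
  obtain ⟨p, u, hu, hu₁⟩ := h₁.exists_symm_isFilippovArc hg hF hneg
  obtain ⟨q, v, hv, hv₂⟩ := h₂.exists_symm_isFilippovArc hg hF hneg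
  obtain ⟨rfl, rfl⟩ := hu.eq_of_symm hv (isFilippovCharacteristic_filippov hg hF hneg)
  obtain ⟨ht₁, ht₀, huy₁⟩ := hu₁ t₀ t₁ he₁
  obtain ⟨hs₁, hs₀, huy₂⟩ := hv₂ s₀ s₁ he₂
  have hmem : y₁ t ∈ Icc (y₂ s₁) (y₂ s₀) := by
    rw [hs₁, hs₀, ← ht₁, ← ht₀]
    exact h₁.snd_mem_Icc hg he₁ ht'
  obtain ⟨s, hs, hys⟩ :=
    intermediate_value_Icc' he₂.lt.le h₂.continuous_snd.continuousOn hmem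
  have hpot : potential g (x₂ s) = potential g (x₁ t) := by rw [← huy₁ t ht', ← huy₂ s hs, hys]
  refine ⟨s, Prod.ext (hg.strictMonoOn_potential.injOn ?_ ?_ hpot) hys⟩
  exacts [⟨he₂.nonneg hs, (abs_lt.1 (h₂.abs_fst_lt s)).2⟩, ⟨ht, (abs_lt.1 (h₁.abs_fst_lt t)).2⟩]

theorem range_subset (h₁ : IsClosedOrbit F g d x₁ y₁) (h₂ : IsClosedOrbit F g d x₂ y₂)
    (hg : IsRestoringForce g d) (hF : IsLienardDamping F a d) (hneg : ∀ x ∈ Ioo 0 a, F x < 0) :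
    (range fun t => (x₁ t, y₁ t)) ⊆ range fun t => (x₂ t, y₂ t) := by
  rintro _ ⟨t, rfl⟩
  rcases le_total 0 (x₁ t) with ht | ht
  · exact h₁.mem_range_of_fst_nonneg h₂ hg hF hneg ht
  · simpa using (h₁.neg hF.odd hg.odd).mem_range_of_fst_nonneg (h₂.neg hF.odd hg.odd) hg hF hneg
      (neg_nonneg.2 ht)

theorem damping_neg (h : IsClosedOrbit F g d x y) (hg : IsRestoringForce g d)
    (hF : IsLienardDamping F a d) : ∀ x ∈ Ioo 0 a, F x < 0 := by
  refine hF.neg_or_pos.resolve_right fun hpos => not_of_damping_nonneg hg hF.odd ?_ ?_ h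
  · intro x hx
    rcases lt_trichotomy x a with hlt | rfl | hgt
    · exact (hpos x ⟨hx.1, hlt⟩).le
    · exact ((hF.eq_zero_iff x hx).2 rfl).ge
    · exact (hF.pos_of_gt ⟨hgt, hx.2⟩).le
  · refine (countable_insert.2 (countable_insert.2 (countable_singleton (-a)))
      : ({0, a, -a} : Set ℝ).Countable).mono ?_
    rintro x ⟨hx, hFx⟩
    rcases lt_trichotomy x 0 with hlt | rfl | hgt
    · have hFneg : F (-x) = 0 := by rw [hF.odd, hFx, neg_zero]
      have hxa : -x = a := (hF.eq_zero_iff (-x) ⟨neg_pos.2 hlt, neg_lt.1 hx.1⟩).1 hFneg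
      exact .inr (.inr (neg_eq_iff_eq_neg.1 hxa))
    · exact .inl rfl
    · exact .inr (.inl ((hF.eq_zero_iff x ⟨hgt, hx.2⟩).1 hFx))

theorem range_eq (h₁ : IsClosedOrbit F g d x₁ y₁) (h₂ : IsClosedOrbit F g d x₂ y₂)
    (hg : IsRestoringForce g d) (hF : IsLienardDamping F a d) :
    (range fun t => (x₁ t, y₁ t)) = range fun t => (x₂ t, y₂ t) :=
  have hneg := h₁.damping_neg hg hF
  (h₁.range_subset h₂ hg hF hneg).antisymm (h₂.range_subset h₁ hg hF hneg)

end IsClosedOrbit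

end ClosedOrbits

theorem monotoneOn_Ico_of_Ioc_of_Ioo {F : ℝ → ℝ} {a b d : ℝ} (hab : a < b) (hbd : b < d)
    (ha : ContinuousAt F a) (hb : ContinuousAt F b) (h₁ : MonotoneOn F (Ioc a b))
    (h₂ : MonotoneOn F (Ioo b d)) : MonotoneOn F (Ico a d) := by
  have hIcc : MonotoneOn F (Icc a b) := by
    rw [← Ioc_insert_left hab.le]
    refine h₁.insert_of_continuousWithinAt ?_ ha.continuousWithinAt
    rw [← mem_closure_iff_clusterPt, closure_Ioc hab.ne]
    exact left_mem_Icc.2 hab.le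
  have hIco : MonotoneOn F (Ico b d) := by
    rw [← Ioo_insert_left hbd]
    refine h₂.insert_of_continuousWithinAt ?_ hb.continuousWithinAt
    rw [← mem_closure_iff_clusterPt, closure_Ioo hbd.ne]
    exact left_mem_Icc.2 hbd.le
  rw [← Icc_union_Ico_eq_Ico hab.le hbd]
  exact hIcc.union_right hIco (isGreatest_Icc hab.le) (isLeast_Ico hbd)

namespace ExtLienardHyp

variable {f g F : ℝ → ℝ} {d : ℝ}

theorem isRestoringForce (h : ExtLienardHyp f g F d) : IsRestoringForce g d :=
  have ⟨_, _, hg, _, _, hodd, hpos, _⟩ := h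
  ⟨hg, hodd, fun x hx => hpos x hx.1 hx.2⟩

theorem hasStrictDerivAt (h : ExtLienardHyp f g F d) {x : ℝ} (hx : x ∈ Ioo (-d) d) :
    HasStrictDerivAt F (f x) x := by
  obtain ⟨hd, hf, -, hF, -⟩ := h
  rw [funext hF]
  exact hasStrictDerivAt_intervalIntegral_of_continuousOn_Ioo hf ⟨neg_neg_of_pos hd, hd⟩ hx

theorem exists_isLienardDamping (h : ExtLienardHyp f g F d) : ∃ a, IsLienardDamping F a d := by
  have hderiv : ∀ x ∈ Ioo 0 d, HasStrictDerivAt F (f x) x := fun x hx =>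
    h.hasStrictDerivAt ⟨by linarith [hx.1, hx.2], hx.2⟩
  have hcont : ∀ x ∈ Ioo 0 d, ContinuousAt F x := fun x hx => (hderiv x hx).hasDerivAt.continuousAt
  obtain ⟨-, -, -, -, hodd, -, -, a, b, ha, had, hzero, -, hab, hbd, hab_mono, hbd_mono⟩ := h
  refine ⟨a, fun x hx => ⟨f x, hderiv x hx⟩, hodd, ⟨ha, had⟩, fun x hx => ?_, ?_⟩
  · rw [hzero x (by linarith [hx.1]) hx.2]
    refine ⟨?_, fun h => .inr (.inl h)⟩
    rintro (h0 | h | h)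
    exacts [absurd h0 hx.1.ne', h, absurd hx.1 (by linarith)]
  · exact monotoneOn_Ico_of_Ioc_of_Ioo hab hbd (hcont a ⟨ha, had⟩) (hcont b ⟨ha.trans hab, hbd⟩)
      hab_mono.monotoneOn hbd_mono

end ExtLienardHyp

namespace IsPeriodicOrbitOf

variable {F F' g : ℝ → ℝ} {d : ℝ} {Γ : Set (ℝ × ℝ)}

theorem exists_isClosedOrbit (hΓ : IsPeriodicOrbitOf F g Γ) (hstrip : ∀ p ∈ Γ, |p.1| < d) :
    ∃ x y, IsClosedOrbit F g d x y ∧ Γ = range fun t => (x t, y t) := by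
  obtain ⟨x, y, hsol, hper, hne, rfl⟩ := hΓ
  exact ⟨x, y, ⟨hsol, hper, hne, fun t => hstrip _ (mem_range_self t)⟩, rfl⟩

theorem congr_damping (hΓ : IsPeriodicOrbitOf F g Γ) (h : ∀ p ∈ Γ, F' p.1 = F p.1) :
    IsPeriodicOrbitOf F' g Γ := by
  obtain ⟨x, y, hsol, hper, hne, rfl⟩ := hΓ
  refine ⟨x, y, fun t => ⟨?_, (hsol t).2⟩, hper, hne, rfl⟩
  rw [h _ (mem_range_self t)]
  exact (hsol t).1

end IsPeriodicOrbitOf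

theorem amplitude_independent_of_asymptotics_general {F₁ F₂ g : ℝ → ℝ} {a d : ℝ}
    (hg : IsRestoringForce g d) (hF₂ : IsLienardDamping F₂ a d) {Γ₁ : Set (ℝ × ℝ)}
    (hΓ₁ : IsPeriodicOrbitOf F₁ g Γ₁) (hstrip : ∀ p ∈ Γ₁, |p.1| < d)
    (heq : ∀ p ∈ Γ₁, F₂ p.1 = F₁ p.1) :
    IsPeriodicOrbitOf F₂ g Γ₁ ∧
      ∀ Γ, IsPeriodicOrbitOf F₂ g Γ → (∀ p ∈ Γ, |p.1| < d) → Γ = Γ₁ := by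
  have hΓ₂ : IsPeriodicOrbitOf F₂ g Γ₁ := hΓ₁.congr_damping heq
  refine ⟨hΓ₂, fun Γ hΓ hΓd => ?_⟩
  obtain ⟨x₁, y₁, h₁, rfl⟩ := hΓ₂.exists_isClosedOrbit hstrip
  obtain ⟨x, y, h, rfl⟩ := hΓ.exists_isClosedOrbit hΓd
  exact h.range_eq h₁ hg hF₂

/-- The amplitude of the unique limit cycle is independent of the behaviour of `F`
beyond the amplitude: if `F₂` agrees with `F₁` on `|x| ≤ α̂`, the amplitude of the
unique limit cycle `Γ₁` of the first system, then `Γ₁` is also the unique limit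
cycle of the second system. -/
theorem amplitude_independent_of_asymptotics
    (f₁ f₂ g F₁ F₂ : ℝ → ℝ) (d : ℝ)
    (h1 : ExtLienardHyp f₁ g F₁ d) (h2 : ExtLienardHyp f₂ g F₂ d)
    (Γ₁ : Set (ℝ × ℝ)) (αhat : ℝ)
    (hΓ₁ : IsPeriodicOrbitOf F₁ g Γ₁)
    (hstrip : ∀ p ∈ Γ₁, |p.1| < d)
    (hamp : IsGreatest {r : ℝ | ∃ p ∈ Γ₁, |p.1| = r} αhat)
    (heq : ∀ x : ℝ, |x| ≤ αhat → F₂ x = F₁ x) :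
    IsPeriodicOrbitOf F₂ g Γ₁ ∧
      ∀ Γ : Set (ℝ × ℝ), IsPeriodicOrbitOf F₂ g Γ → (∀ p ∈ Γ, |p.1| < d) →
        Γ = Γ₁ := by
  obtain ⟨a, hF₂⟩ := h2.exists_isLienardDamping
  exact amplitude_independent_of_asymptotics_general h2.isRestoringForce hF₂ hΓ₁ hstrip
    fun p hp => heq p.1 (hamp.2 ⟨p, hp, rfl⟩)
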